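/- Let k be a field of characteristic 0, and let S and R be integral domains that are finitely generated k-algebras, with R a k-subalgebra of S. Assume that R is integrally closed in its fraction field, and that every ideal of height 1 in R generates a proper ideal in S (i.e., for every ideal I of R with height I = 1, the ideal of S generated by the image of I is not the unit ideal). Let F : S → S be a k-algebra endomorphism with F(R) ⊆ R. If F is bijective, then the restriction of F to R, viewed as a map R → R, is bijective. -/

import Mathlib

/-- The height of an ideal `I`: the infimum of the heights of the prime ideals
containing `I` (in the prime spectrum, ordered by inclusion). -/
noncomputable def Ideal.heightOf {R : Type*} [CommRing R] (I : Ideal R) : ℕ∞ :=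
  ⨅ p ∈ {p : PrimeSpectrum R | I ≤ p.asIdeal}, Order.height p

/-!
Let `γ` be the restriction of the automorphism `F` to `R`. Call a prime of `R` a pole if some
element of `S` that an iterate of `F` sends into `R` does not lie in the localization there; the
claim is that there are no poles. Such elements are fractions of `R`, because the fields between
`k` and `Frac S` satisfy the ascending chain condition. A minimal pole has height one, as `R` is
normal, and lies below no prime of `S`, so by Chevalley's theorem there are finitely many. If
there were one, it would generate a proper ideal of `S`, so some prime of `S` would lie over a
pole. The primes over poles form an `F`-stable closed set, and a power of `F` fixes a component
`P` of it, hence also the pole `Q` below `P`.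

Replace `F` by this power. The map `γ` is surjective on the residue field of `Q`, again by the
ascending chain condition, and therefore on the Artinian rings `R_Q / (Pⁿ S_P ∩ R_Q)`, by comparing
lengths. Hence every `s` with `F s ∈ R` is congruent to an element of `R_Q` modulo every power of
`P S_P`. After adjoining to `k` a transcendence basis of the residue field, `Q` is maximal, and
Noether normalization presents the completion of `R_Q` through `R ⊗ k⟦x⟧`. The kernel `K` of its
map to the completion of `S_P` is stable under the derivations of `R`. In characteristic zero a
nonzero ideal of `R` stable under derivations lies in no height-one prime, so that the contraction
of `K + Ann K` contains some `r ≠ 0` and a nonzerodivisor modulo `r`, and these split off `K` by an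
idempotent. The limit `s` of elements of `R_Q` therefore lies in `R_Q`, and `Q` is not a pole.
-/

section AscendingChain

theorem apply_eq_of_le_apply {α : Type*} [PartialOrder α] [WellFoundedGT α] {f : α → α}
    (hf : StrictMono f) {a : α} (ha : a ≤ f a) : f a = a := by
  by_contra hne
  exact not_strictMono_of_wellFoundedGT _
    (hf.strictMono_iterate_of_lt_map (lt_of_le_of_ne ha (Ne.symm hne)))

open TensorProduct Algebra.TensorProduct

/-- The ideal of `L ⊗[k] L` generated by the elements `x ⊗ 1 - 1 ⊗ x` with `x` in the intermediate
field `E`, the kernel of `L ⊗[k] L → L ⊗[E] L`. It remembers `E`. -/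
def diagonalIdeal {k L : Type*} [Field k] [Field L] [Algebra k L] (E : IntermediateField k L) :
    Ideal (L ⊗[k] L) :=
  Ideal.span (includeLeftSubRight k L '' E)

variable {k L : Type*} [Field k] [Field L] [Algebra k L]

theorem includeLeftSubRight_mem_diagonalIdeal_iff (E : IntermediateField k L) (x : L) :
    includeLeftSubRight k L x ∈ diagonalIdeal E ↔ x ∈ E := by
  refine ⟨fun hx => ?_, fun hx => Ideal.subset_span ⟨x, hx, rfl⟩⟩
  let π : L ⊗[k] L →ₐ[k] L ⊗[E] L := Algebra.TensorProduct.mapOfCompatibleSMul E k k L L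
  have hπ (y : L) : π (includeLeftSubRight k L y) =
      includeLeftSubRight E L y := by
    simp [π, includeLeftSubRight_apply]
  have hker : diagonalIdeal E ≤ RingHom.ker π := by
    rw [diagonalIdeal, Ideal.span_le]
    rintro _ ⟨y, hy, rfl⟩
    exact (hπ y).trans (includeLeftSubRight_zero_of_mem_range ⟨⟨y, hy⟩, rfl⟩)
  have hx0 : includeLeftSubRight E L x = 0 := (hπ x).symm.trans (hker hx)
  obtain ⟨y, rfl⟩ := (Algebra.IsEffective.of_faithfullyFlat E L x).1 hx0
  exact y.2

theorem strictMono_diagonalIdeal : StrictMono (diagonalIdeal (k := k) (L := L)) := by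
  refine Monotone.strictMono_of_injective
    (fun E E' h => Ideal.span_mono (Set.image_mono h)) fun E E' h => ?_
  ext x
  rw [← includeLeftSubRight_mem_diagonalIdeal_iff, h, includeLeftSubRight_mem_diagonalIdeal_iff]

instance wellFoundedGT_intermediateField [Algebra.EssFiniteType k L] :
    WellFoundedGT (IntermediateField k L) := by
  have : Algebra.EssFiniteType k (L ⊗[k] L) := Algebra.EssFiniteType.comp k L _
  have : IsNoetherianRing (L ⊗[k] L) := Algebra.EssFiniteType.isNoetherianRing k _
  exact strictMono_diagonalIdeal.wellFoundedGT

theorem surjective_of_semiconj_algEquiv {K : Type*} [Field K] [Algebra k K]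
    [Algebra.EssFiniteType k L] (j : K →ₐ[k] L) (φ : L ≃ₐ[k] L) (σ : K → K)
    (h : Function.Semiconj j σ φ) : Function.Surjective σ := by
  have hmono : StrictMono (IntermediateField.comap (φ : L →ₐ[k] L)) := by
    refine Monotone.strictMono_of_injective (fun _ _ h _ hx => h hx) fun E E' h => ?_
    ext x
    have hx : φ (φ.symm x) ∈ E ↔ φ (φ.symm x) ∈ E' := SetLike.ext_iff.1 h (φ.symm x)
    rwa [φ.apply_symm_apply] at hx
  have hfix : j.fieldRange.comap (φ : L →ₐ[k] L) = j.fieldRange := by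
    refine apply_eq_of_le_apply hmono ?_
    rintro _ ⟨y, rfl⟩
    exact ⟨σ y, h y⟩
  intro y
  have hy : φ.symm (j y) ∈ j.fieldRange := by
    rw [← hfix]
    exact ⟨y, (φ.apply_symm_apply _).symm⟩
  obtain ⟨z, hz⟩ := hy
  exact ⟨z, j.toRingHom.injective ((h z).trans (φ.eq_symm_apply.1 hz))⟩

end AscendingChain

section DenominatorIdeal

/-- The ideal of denominators of an element `s` of an `R`-algebra: the `r : R` for which `r * s`
comes from `R`. -/
def denominatorIdeal (R : Type*) {T : Type*} [CommRing R] [CommRing T] [Algebra R T] (s : T) :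
    Ideal R :=
  (1 : Submodule R T).colon {s}

variable {R T : Type*} [CommRing R] [CommRing T] [Algebra R T]

theorem mem_denominatorIdeal {s : T} {r : R} :
    r ∈ denominatorIdeal R s ↔ ∃ w : R, algebraMap R T w = algebraMap R T r * s := by
  rw [denominatorIdeal, Submodule.mem_colon_singleton, Submodule.mem_one, Algebra.smul_def]

theorem denominatorIdeal_eq_top_iff {s : T} :
    denominatorIdeal R s = ⊤ ↔ s ∈ (algebraMap R T).range := by
  rw [Ideal.eq_top_iff_one, mem_denominatorIdeal]
  simp

theorem mem_range_algebraMap_of_isIntegral [IsDomain R] [IsIntegrallyClosed R] [IsDomain T]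
    [FaithfulSMul R T] {s : T} (hs : IsIntegral R s) (hden : denominatorIdeal R s ≠ ⊥) :
    s ∈ (algebraMap R T).range := by
  obtain ⟨b, hb, hb0⟩ := Submodule.exists_mem_ne_zero_of_ne_bot hden
  obtain ⟨α, hα⟩ := mem_denominatorIdeal.1 hb
  let K := FractionRing R
  let L := FractionRing T
  let : Algebra K L := FractionRing.liftAlgebra R L
  have : IsScalarTower R K L := FractionRing.isScalarTower_liftAlgebra R L
  have hL : Function.Injective (algebraMap R L) := FaithfulSMul.algebraMap_injective R L
  have hbL : algebraMap R L b ≠ 0 := (map_ne_zero_iff _ hL).2 hb0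
  have hfrac : algebraMap K L (algebraMap R K α / algebraMap R K b) = algebraMap T L s := by
    rw [map_div₀, ← IsScalarTower.algebraMap_apply, ← IsScalarTower.algebraMap_apply,
      div_eq_iff hbL, IsScalarTower.algebraMap_apply R T L, IsScalarTower.algebraMap_apply R T L,
      hα, map_mul, mul_comm]
  have hint : IsIntegral R (algebraMap R K α / algebraMap R K b) := by
    rw [← isIntegral_algebraMap_iff (algebraMap K L).injective, hfrac]
    exact hs.algebraMap
  obtain ⟨y, hy⟩ := IsIntegrallyClosed.isIntegral_iff.1 hint
  refine ⟨y, FaithfulSMul.algebraMap_injective T L ?_⟩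
  rw [← hfrac, ← hy, ← IsScalarTower.algebraMap_apply, ← IsScalarTower.algebraMap_apply]

/-- A prime ideal of denominators `p` of an element `s` of the fraction field: either `s p ⊆ p`, so
that `s` is integral, or some `a ∈ p` satisfies `s a ∉ p` and then generates `p` locally. -/
theorem exists_mul_notMem_denominatorIdeal [IsDomain R] [IsNoetherianRing R] [IsIntegrallyClosed R]
    [IsDomain T] [FaithfulSMul R T] {s : T} (hden : denominatorIdeal R s ≠ ⊥)
    (htop : denominatorIdeal R s ≠ ⊤) :
    ∃ a ∈ denominatorIdeal R s, ∃ t ∉ denominatorIdeal R s,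
      algebraMap R T t = algebraMap R T a * s := by
  by_contra! h
  refine htop (denominatorIdeal_eq_top_iff.2 (mem_range_algebraMap_of_isIntegral ?_ hden))
  have hinj : Function.Injective (Algebra.linearMap R T) := FaithfulSMul.algebraMap_injective R T
  refine isIntegral_of_smul_mem_submodule
    (Submodule.map (Algebra.linearMap R T) (denominatorIdeal R s)) ?_
    ((IsNoetherian.noetherian _).map _) s ?_
  · rwa [Ne, (Submodule.map_injective_of_injective hinj).eq_iff' (Submodule.map_bot _)]
  · rintro _ ⟨a, ha, rfl⟩
    obtain ⟨t, ht⟩ := mem_denominatorIdeal.1 ha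
    refine ⟨t, ?_, ?_⟩
    · by_contra htp
      exact h a ha t htp ht
    · rw [smul_eq_mul, mul_comm]
      exact ht

theorem isDiscreteValuationRing_localization_denominatorIdeal [IsDomain R] [IsNoetherianRing R]
    [IsIntegrallyClosed R] [IsDomain T] [FaithfulSMul R T] {s : T}
    [hp : (denominatorIdeal R s).IsPrime] (hden : denominatorIdeal R s ≠ ⊥) :
    IsDiscreteValuationRing (Localization.AtPrime (denominatorIdeal R s)) := by
  set p := denominatorIdeal R s
  obtain ⟨a, ha, t, ht, hts⟩ := exists_mul_notMem_denominatorIdeal hden hp.ne_top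
  let A := Localization.AtPrime p
  have : IsDomain A := IsLocalization.isDomain_localization p.primeCompl_le_nonZeroDivisors
  have hmax : IsLocalRing.maximalIdeal A = Ideal.span {algebraMap R A a} := by
    rw [← Localization.AtPrime.map_eq_maximalIdeal]
    refine le_antisymm (Ideal.map_le_iff_le_comap.2 fun r hr => ?_)
      ((Ideal.span_singleton_le_iff_mem _).2 (Ideal.mem_map_of_mem _ ha))
    obtain ⟨w, hw⟩ := mem_denominatorIdeal.1 hr
    have hrt : t * r = w * a := FaithfulSMul.algebraMap_injective R T <| by
      rw [map_mul, map_mul]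
      linear_combination algebraMap R T r * hts - algebraMap R T a * hw
    have htu : IsUnit (algebraMap R A t) := IsLocalization.map_units A (M := p.primeCompl) ⟨t, ht⟩
    rw [Ideal.mem_comap, Ideal.mem_span_singleton, ← htu.dvd_mul_left, ← map_mul, hrt, map_mul]
    exact dvd_mul_left _ _
  have hfield : ¬ IsField A := by
    rw [IsLocalRing.isField_iff_maximalIdeal_eq, ← Localization.AtPrime.map_eq_maximalIdeal,
      Ideal.map_eq_bot_iff_of_injective
        (IsLocalization.injective A p.primeCompl_le_nonZeroDivisors)]
    exact hden
  have hprincipal : (IsLocalRing.maximalIdeal A).IsPrincipal := ⟨_, hmax⟩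
  exact ((IsDiscreteValuationRing.TFAE A hfield).out 0 4).2 hprincipal

theorem exists_notMem_dvd_mul_or_dvd_mul [IsDomain R] (p : Ideal R) [hp : p.IsPrime]
    [ValuationRing (Localization.AtPrime p)] (a b : R) :
    ∃ u ∉ p, a ∣ u * b ∨ b ∣ u * a := by
  have hdvd {x y : R} (h : algebraMap R (Localization.AtPrime p) x ∣ algebraMap R _ y) :
      ∃ u ∉ p, x ∣ u * y := by
    obtain ⟨z, hz⟩ := h
    obtain ⟨⟨w, u⟩, hw⟩ := IsLocalization.surj p.primeCompl z
    refine ⟨u, u.2, w, FaithfulSMul.algebraMap_injective R (Localization.AtPrime p) ?_⟩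
    rw [map_mul, map_mul, ← hw, hz]
    ring
  rcases ValuationRing.dvd_total (algebraMap R (Localization.AtPrime p) a) (algebraMap R _ b)
    with h | h
  · exact (hdvd h).imp fun u hu => hu.imp_right Or.inl
  · exact (hdvd h).imp fun u hu => hu.imp_right Or.inr

theorem exists_mul_eq_of_denominatorIdeal_le [IsDomain R] [IsDomain T] [FaithfulSMul R T] {s : T}
    {p : Ideal R} [hp : p.IsPrime] [ValuationRing (Localization.AtPrime p)]
    (hden : denominatorIdeal R s ≠ ⊥) (hle : denominatorIdeal R s ≤ p) :
    ∃ c ∈ p, ∃ w ∉ p, algebraMap R T c * s = algebraMap R T w := by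
  obtain ⟨b, hb, hb0⟩ := Submodule.exists_mem_ne_zero_of_ne_bot hden
  obtain ⟨α, hα⟩ := mem_denominatorIdeal.1 hb
  have hb0 : algebraMap R T b ≠ 0 :=
    (map_ne_zero_iff _ (FaithfulSMul.algebraMap_injective R T)).2 hb0
  obtain ⟨u, hu, ⟨x, hx⟩ | ⟨x, hx⟩⟩ := exists_notMem_dvd_mul_or_dvd_mul p b α
  · refine absurd (hle (mem_denominatorIdeal.2 ⟨x, mul_left_cancel₀ hb0 ?_⟩)) hu
    rw [← map_mul, ← hx, map_mul, hα]
    ring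
  · have hxs : algebraMap R T x * s = algebraMap R T u := mul_left_cancel₀ hb0 <| by
      rw [mul_left_comm, ← hα, ← map_mul, mul_comm x, ← hx, map_mul, mul_comm]
    exact ⟨x, hle (mem_denominatorIdeal.2 ⟨u, hxs.symm⟩), u, hu, hxs⟩

theorem height_eq_one_of_isDiscreteValuationRing [IsDomain R] (p : Ideal R) [p.IsPrime]
    [IsDiscreteValuationRing (Localization.AtPrime p)] : p.height = 1 := by
  have hdim := IsLocalization.AtPrime.ringKrullDim_eq_height p (Localization.AtPrime p)
  rw [IsPrincipalIdealRing.ringKrullDim_eq_one _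
    (IsDiscreteValuationRing.not_isField (Localization.AtPrime p))] at hdim
  exact_mod_cast hdim.symm

end DenominatorIdeal

section Chevalley

variable {R : Type*} [CommRing R] [IsDomain R]

theorem mem_minimalPrimes_span_singleton_of_height_eq_one {p : Ideal R} [p.IsPrime]
    (hht : p.height = 1) {f : R} (hf0 : f ≠ 0) (hf : f ∈ p) :
    p ∈ (Ideal.span {f}).minimalPrimes := by
  have : p.FiniteHeight := ⟨Or.inr (by simp [hht])⟩
  refine Ideal.mem_minimalPrimes_of_height_le ((Ideal.span_singleton_le_iff_mem p).2 hf) ?_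
  rw [hht, Order.one_le_iff_ne_zero, Ne, Ideal.height_eq_zero_iff_eq_bot]
  simpa

theorem exists_forall_mem_range_comap {S : Type*} [CommRing S] [IsNoetherianRing R]
    [IsDomain S] [Algebra R S] [FaithfulSMul R S] [Algebra.FiniteType R S] :
    ∃ f : R, f ≠ 0 ∧ ∀ p : Ideal R, p.IsPrime → f ∉ p →
      ∃ P : Ideal S, P.IsPrime ∧ P.comap (algebraMap R S) = p := by
  have hfp : (algebraMap R S).FinitePresentation := by
    rw [RingHom.finitePresentation_algebraMap]
    exact (Algebra.FinitePresentation.of_finiteType).1 inferInstance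
  obtain ⟨C, hC⟩ := PrimeSpectrum.exists_constructibleSetData_iff.2
    (PrimeSpectrum.isConstructible_range_comap hfp)
  have hbot : (⟨⊥, Ideal.isPrime_bot⟩ : PrimeSpectrum R) ∈ C.toSet := by
    rw [hC]
    refine ⟨⟨⊥, Ideal.isPrime_bot⟩, ?_⟩
    ext1
    exact Ideal.comap_bot_of_injective _ (FaithfulSMul.algebraMap_injective R S)
  rw [PrimeSpectrum.ConstructibleSetData.toSet, Set.mem_iUnion₂] at hbot
  obtain ⟨D, hD, hbot⟩ := hbot
  have hg : Set.range D.g ⊆ {0} := hbot.1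
  have hf : D.f ≠ 0 := fun h0 => hbot.2 (by
    rw [PrimeSpectrum.mem_zeroLocus, h0]; simp)
  refine ⟨D.f, hf, fun p hp hfp => ?_⟩
  have hmem : (⟨p, hp⟩ : PrimeSpectrum R) ∈ C.toSet := by
    rw [PrimeSpectrum.ConstructibleSetData.toSet, Set.mem_iUnion₂]
    refine ⟨D, hD, ?_, fun h => hfp (h rfl)⟩
    rw [PrimeSpectrum.mem_zeroLocus]
    intro x hx
    rw [Set.mem_singleton_iff.1 (hg hx)]
    exact p.zero_mem
  rw [hC] at hmem
  obtain ⟨P, hP⟩ := hmem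
  exact ⟨P.asIdeal, P.2, congrArg PrimeSpectrum.asIdeal hP⟩

end Chevalley

section ArtinianCongruence

open IsLocalRing

theorem isArtinianRing_quotient_of_forall_isMaximal {A : Type*} [CommRing A] [IsNoetherianRing A]
    {J : Ideal A} (h : ∀ p : Ideal A, p.IsPrime → J ≤ p → p.IsMaximal) :
    IsArtinianRing (A ⧸ J) := by
  refine isArtinianRing_iff_isNoetherianRing_krullDimLE_zero.2
    ⟨inferInstance, Ring.krullDimLE_zero_iff.2 fun q hq => ?_⟩
  have := h (q.comap (Ideal.Quotient.mk J)) (Ideal.comap_isPrime _ q) fun x hx => by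
    rw [Ideal.mem_comap, Ideal.Quotient.eq_zero_iff_mem.2 hx]
    exact q.zero_mem
  rw [← Ideal.map_comap_of_surjective _ Ideal.Quotient.mk_surjective q]
  exact Ideal.IsMaximal.map_of_surjective_of_ker_le Ideal.Quotient.mk_surjective
    (Ideal.comap_mono bot_le)

/-- By the multiplicativity of lengths, `B` has the length of `A` as an `A`-module. -/
theorem surjective_of_surjective_residueField_map {A B : Type*} [CommRing A] [IsLocalRing A]
    [CommRing B] [IsLocalRing B] [IsArtinianRing B] (γ : A →+* B) [IsLocalHom γ]
    (hγ : Function.Injective γ) (hres : Function.Surjective (ResidueField.map γ))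
    (hlen : Module.length B B ≤ Module.length A A) : Function.Surjective γ := by
  algebraize [γ]
  have : IsLocalHom (algebraMap A B) := ‹IsLocalHom γ›
  have hone : Module.length (ResidueField A) (ResidueField B) = 1 := by
    have h := Module.length_eq_of_surjective (S := ResidueField A) (R := ResidueField B)
      (M := ResidueField B) hres
    rw [h, Module.length_eq_one]
  have hAB : Module.length A B = Module.length B B := by
    rw [IsLocalRing.length_restrictScalars A B B, hone, mul_one]
  have hfin : IsFiniteLength A B := by
    rw [← Module.length_ne_top_iff, hAB]
    exact Module.length_ne_top
  obtain ⟨_, _⟩ := isFiniteLength_iff_isNoetherian_isArtinian.1 hfin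
  have hrange : (Algebra.linearMap A B).range = ⊤ := by
    by_contra hlt
    have h := Submodule.length_lt hlt
    rw [← (LinearEquiv.ofInjective (Algebra.linearMap A B) hγ).length_eq, hAB] at h
    exact absurd hlen h.not_ge
  exact LinearMap.range_eq_top.1 hrange

theorem exists_sub_map_mem_of_comap_eq {A : Type*} [CommRing A] [IsLocalRing A] (γ : A →+* A)
    [IsLocalHom γ] (hres : Function.Surjective (ResidueField.map γ)) {I : Ideal A}
    [IsArtinianRing (A ⧸ I)] (hI : I.comap γ = I) (a : A) : ∃ a', a - γ a' ∈ I := by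
  rcases eq_or_ne I ⊤ with rfl | htop
  · exact ⟨0, Submodule.mem_top⟩
  have : Nontrivial (A ⧸ I) := Ideal.Quotient.nontrivial_iff.2 htop
  have : IsLocalRing (A ⧸ I) := .of_surjective' _ Ideal.Quotient.mk_surjective
  have hmk : IsLocalHom (Ideal.Quotient.mk I) := .of_surjective _ Ideal.Quotient.mk_surjective
  let γI : A ⧸ I →+* A ⧸ I := Ideal.quotientMap I γ hI.ge
  have : IsLocalHom γI := by
    refine ⟨fun x hx => ?_⟩
    obtain ⟨a, rfl⟩ := Ideal.Quotient.mk_surjective x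
    exact ((hx.of_map (Ideal.Quotient.mk I)).of_map γ).map _
  have hresI : Function.Surjective (ResidueField.map γI) := by
    intro x
    obtain ⟨x, rfl⟩ := residue_surjective x
    obtain ⟨a, rfl⟩ := Ideal.Quotient.mk_surjective x
    obtain ⟨y, hy⟩ := hres (residue A a)
    obtain ⟨a', rfl⟩ := residue_surjective y
    exact ⟨residue _ (Ideal.Quotient.mk I a'), congr(ResidueField.map (Ideal.Quotient.mk I) $hy)⟩
  obtain ⟨y, hy⟩ := surjective_of_surjective_residueField_map γI
    (Ideal.quotientMap_injective' hI.le) hresI le_rfl (Ideal.Quotient.mk I a)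
  obtain ⟨a', rfl⟩ := Ideal.Quotient.mk_surjective y
  exact ⟨a', Ideal.Quotient.eq.1 hy.symm⟩

variable {A T : Type*} [CommRing A] [IsLocalRing A] [CommRing T] [IsLocalRing T]

theorem exists_sub_map_mem_pow_of_semiconj [IsNoetherianRing A] (ρ : A →+* T) [IsLocalHom ρ]
    (γ : A →+* A) [IsLocalHom γ] (g : T ≃+* T) (h : Function.Semiconj ρ γ g)
    (hres : Function.Surjective (ResidueField.map γ)) {x : T} {a : A} (hx : g x = ρ a) (n : ℕ) :
    ∃ a', x - ρ a' ∈ maximalIdeal T ^ n := by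
  have hg : (maximalIdeal T ^ n).comap g = maximalIdeal T ^ n := by
    rw [← Ideal.map_symm, Ideal.map_pow, IsLocalRing.map_ringEquiv_maximalIdeal]
  let I : Ideal A := (maximalIdeal T ^ n).comap ρ
  have hI : I.comap γ = I := by
    ext x
    rw [Ideal.mem_comap, Ideal.mem_comap, h x, ← Ideal.mem_comap (f := g), hg, Ideal.mem_comap]
  have hmI : maximalIdeal A ^ n ≤ I := Ideal.map_le_iff_le_comap.1 <| by
    rw [Ideal.map_pow]
    exact Ideal.pow_right_mono (map_maximalIdeal_le ρ) n
  have : IsArtinianRing (A ⧸ I) := isArtinianRing_quotient_of_forall_isMaximal fun p hp hIp =>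
    (maximalIdeal.isMaximal A).eq_of_le hp.ne_top (hp.le_of_pow_le (hmI.trans hIp)) ▸ inferInstance
  obtain ⟨a', ha'⟩ := exists_sub_map_mem_of_comap_eq γ hres hI a
  refine ⟨a', ?_⟩
  rwa [← hg, Ideal.mem_comap, map_sub, hx, ← h a', ← map_sub]

theorem residueField_map_surjective_of_semiconj {k : Type*} [Field k] [Algebra k A] [Algebra k T]
    [Algebra.EssFiniteType k T] (ρ : A →ₐ[k] T) [IsLocalHom ρ] (γ : A →+* A) [IsLocalHom γ]
    (g : T ≃ₐ[k] T) (h : Function.Semiconj ρ γ g) :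
    Function.Surjective (ResidueField.map γ) := by
  have : Algebra.EssFiniteType k (ResidueField T) :=
    inferInstanceAs (Algebra.EssFiniteType k (T ⧸ maximalIdeal T))
  refine surjective_of_semiconj_algEquiv (ResidueField.mapAlgHom ρ) (ResidueField.mapAlgEquiv g) _
    fun x => ?_
  obtain ⟨a, rfl⟩ := residue_surjective x
  exact congr(residue T $(h a))

end ArtinianCongruence

section FractionField

variable {k R S : Type*} [Field k] [CommRing R] [IsDomain R] [CommRing S] [IsDomain S] [Algebra k R]
  [Algebra k S] [Algebra.EssFiniteType k S] [Algebra R S] [IsScalarTower k R S] [FaithfulSMul R S]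

theorem exists_eq_mul_of_semiconj (γ : R →ₐ[k] R) (hγ : Function.Injective γ) (g : S ≃ₐ[k] S)
    (h : Function.Semiconj (algebraMap R S) γ g) (r : R) : ∃ a b, b ≠ 0 ∧ γ a = r * γ b := by
  let K := FractionRing R
  let L := FractionRing S
  have : Algebra.EssFiniteType k L := .comp k S L
  have hK : Function.Injective ((IsScalarTower.toAlgHom k R K).comp γ) :=
    (IsFractionRing.injective R K).comp hγ
  have hL : Function.Injective ((IsScalarTower.toAlgHom k S L).comp
      (IsScalarTower.toAlgHom k R S)) :=
    (IsFractionRing.injective S L).comp (FaithfulSMul.algebraMap_injective R S)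
  let σ : K →ₐ[k] K := IsFractionRing.liftAlgHom hK
  let j : K →ₐ[k] L := IsFractionRing.liftAlgHom hL
  let φ : L ≃ₐ[k] L := IsFractionRing.algEquivOfAlgEquiv g
  have hσ (a : R) : σ (algebraMap R K a) = algebraMap R K (γ a) :=
    IsFractionRing.lift_algebraMap hK a
  have hj (a : R) : j (algebraMap R K a) = algebraMap S L (algebraMap R S a) :=
    IsFractionRing.lift_algebraMap hL a
  have hφ (a : S) : φ (algebraMap S L a) = algebraMap S L (g a) :=
    IsFractionRing.algEquivOfAlgEquiv_algebraMap g a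
  have hsurj : Function.Surjective σ := surjective_of_semiconj_algEquiv j φ σ fun x => by
    obtain ⟨a, b, -, rfl⟩ := IsFractionRing.div_surjective (A := R) x
    simp only [map_div₀, hσ, hj, hφ, h a, h b]
  obtain ⟨x, hx⟩ := hsurj (algebraMap R K r)
  obtain ⟨a, b, hb, rfl⟩ := IsFractionRing.div_surjective (A := R) x
  have hb0 : σ (algebraMap R K b) ≠ 0 := by
    simpa using nonZeroDivisors.ne_zero hb
  refine ⟨a, b, nonZeroDivisors.ne_zero hb, IsFractionRing.injective R K ?_⟩
  rw [← hσ, map_mul, ← hσ, ← hx, map_div₀, div_mul_cancel₀ _ hb0]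

theorem denominatorIdeal_ne_bot_of_semiconj (γ : R →ₐ[k] R) (g : S ≃ₐ[k] S)
    (h : Function.Semiconj (algebraMap R S) γ g) {s : S} (hs : g s ∈ (algebraMap R S).range) :
    denominatorIdeal R s ≠ ⊥ := by
  have hγ : Function.Injective γ := .of_comp (f := algebraMap R S) <| by
    rw [h.comp_eq]
    exact g.injective.comp (FaithfulSMul.algebraMap_injective R S)
  obtain ⟨r, hr⟩ := hs
  obtain ⟨a, b, hb, hab⟩ := exists_eq_mul_of_semiconj γ hγ g h r
  refine (Submodule.ne_bot_iff _).2 ⟨b, mem_denominatorIdeal.2 ⟨a, g.injective ?_⟩, hb⟩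
  rw [← h a, hab, map_mul, map_mul, hr, h b, mul_comm]

end FractionField

section Derivations

theorem exists_derivation_of_forall_mem_range {k R M N : Type*} [CommRing k] [CommRing R]
    [Algebra k R] [AddCommGroup M] [Module R M] [Module k M] [IsScalarTower k R M] [AddCommGroup N]
    [Module R N] [Module k N] [IsScalarTower k R N] (ι : N →ₗ[R] M) (hι : Function.Injective ι)
    (D : Derivation k R M) (h : ∀ r, D r ∈ ι.range) :
    ∃ d : Derivation k R N, ∀ r, ι (d r) = D r := by
  let e := LinearEquiv.ofInjective ι hι
  let f : R →ₗ[k] ι.range := (D : R →ₗ[k] M).codRestrict (ι.range.restrictScalars k) h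
  have hf (r : R) : ι (e.symm (f r)) = D r := congrArg Subtype.val (e.apply_symm_apply (f r))
  refine ⟨.mk' ((e.symm : ι.range →ₗ[R] N).restrictScalars k ∘ₗ f) fun a b => hι ?_, hf⟩
  simp only [LinearMap.comp_apply, LinearMap.restrictScalars_apply, LinearEquiv.coe_coe, map_add,
    map_smul]
  rw [hf, hf, hf, D.leibniz]

theorem exists_derivation_algebraMap_eq_mul {k T L : Type*} [CommRing k] [CommRing T]
    [Algebra k T] [Algebra.EssFiniteType k T] [CommRing L] [Algebra T L] [Algebra k L]
    [IsScalarTower k T L] [FaithfulSMul T L] (M : Submonoid T) [IsLocalization M L]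
    (D : Derivation k T L) :
    ∃ τ ∈ M, ∃ d : Derivation k T T, ∀ t, algebraMap T L (d t) = algebraMap T L τ * D t := by
  have hfg : D.liftKaehlerDifferential.range.FG := Module.Finite.iff_fg.1 inferInstance
  obtain ⟨τ, hτ, h⟩ := FractionalIdeal.isFractional_of_fg (S := M) hfg
  obtain ⟨d, hd⟩ := exists_derivation_of_forall_mem_range (Algebra.linearMap T L)
    (FaithfulSMul.algebraMap_injective T L) (τ • D)
    fun t => h _ ⟨KaehlerDifferential.D k T t, D.liftKaehlerDifferential_comp_D t⟩
  exact ⟨τ, hτ, d, fun t => (hd t).trans (Algebra.smul_def _ _)⟩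

theorem formallySmooth_of_charZero {A L : Type*} [CommRing A] [IsDomain A] [CharZero A] [Field L]
    [Algebra A L] [FaithfulSMul A L] : Algebra.FormallySmooth A L := by
  let K := FractionRing A
  let _ : Algebra K L := FractionRing.liftAlgebra A L
  have : IsScalarTower A K L := FractionRing.isScalarTower_liftAlgebra A L
  have : CharZero K := charZero_of_injective_algebraMap (IsFractionRing.injective A K)
  have : Algebra.FormallySmooth A K := .of_isLocalization (nonZeroDivisors A)
  have : Algebra.FormallySmooth K L := by
    obtain ⟨s, hs⟩ := exists_isTranscendenceBasis K L
    have := hs.isAlgebraic_field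
    exact .of_algebraicIndependent_of_isSeparable hs.1
  exact .comp A K L

/-- Formal smoothness of `L` over `A` makes `L ⊗[A] Ω[A⁄k] → Ω[L⁄k]` injective. -/
theorem exists_derivation_extending {k A L : Type*} [CommRing k] [CommRing A] [IsDomain A]
    [CharZero A] [Field L] [Algebra k A] [Algebra A L] [Algebra k L] [IsScalarTower k A L]
    [FaithfulSMul A L] (d : Derivation k A L) :
    ∃ D : Derivation k L L, ∀ a, D (algebraMap A L a) = d a := by
  have := formallySmooth_of_charZero (A := A) (L := L)
  have hinj : Function.Injective (KaehlerDifferential.mapBaseChange k A L) := by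
    refine (injective_iff_map_eq_zero _).2 fun x hx => ?_
    obtain ⟨y, rfl⟩ := (Algebra.H1Cotangent.exact_δ_mapBaseChange k A L x).1 hx
    rw [Subsingleton.elim y 0, map_zero]
  obtain ⟨ℓ, hℓ⟩ := (KaehlerDifferential.mapBaseChange k A L).exists_leftInverse_of_injective
    (LinearMap.ker_eq_bot.2 hinj)
  refine ⟨((d.liftKaehlerDifferential.liftBaseChange L) ∘ₗ ℓ).compDer (KaehlerDifferential.D k L),
    fun a => ?_⟩
  have ha := LinearMap.congr_fun hℓ (1 ⊗ₜ[A] KaehlerDifferential.D k A a)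
  rw [LinearMap.comp_apply, KaehlerDifferential.mapBaseChange_tmul, one_smul,
    KaehlerDifferential.map_D, LinearMap.id_apply] at ha
  simp [ha]

theorem exists_derivation_extending_mul {k A T : Type*} [CommRing k] [CommRing A] [IsDomain A]
    [CharZero A] [CommRing T] [IsDomain T] [Algebra k A] [Algebra A T] [Algebra k T]
    [IsScalarTower k A T] [FaithfulSMul A T] [Algebra.EssFiniteType k T] (d : Derivation k A A) :
    ∃ τ : T, τ ≠ 0 ∧ ∃ d' : Derivation k T T,
      ∀ a, d' (algebraMap A T a) = τ * algebraMap A T (d a) := by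
  let L := FractionRing T
  have : IsScalarTower k A L := .of_algebraMap_eq' <| by
    rw [IsScalarTower.algebraMap_eq k T L, IsScalarTower.algebraMap_eq k A T,
      IsScalarTower.algebraMap_eq A T L, RingHom.comp_assoc]
  have : FaithfulSMul A L := .trans A T L
  obtain ⟨D, hD⟩ := exists_derivation_extending ((Algebra.linearMap A L).compDer d)
  obtain ⟨τ, hτ, d', hd'⟩ := exists_derivation_algebraMap_eq_mul (nonZeroDivisors T)
    (D.compAlgebraMap T)
  refine ⟨τ, nonZeroDivisors.ne_zero hτ, d', fun a => IsFractionRing.injective T L ?_⟩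
  rw [hd', map_mul, ← IsScalarTower.algebraMap_apply]
  exact congrArg _ (hD a)

open Polynomial in
/-- In the list of iterated derivatives of a monic `f` with `f(r) = 0`, the last one is the constant
`f.natDegree !`, so there is a last one with value at `r` in `p`. -/
theorem exists_aeval_mem_aeval_derivative_notMem {A R : Type*} [CommRing A] [CommRing R]
    [Algebra A R] [Algebra.IsIntegral A R] (p : Ideal R) [p.IsPrime] [CharZero (R ⧸ p)] (r : R) :
    ∃ f : A[X], aeval r f ∈ p ∧ aeval r (derivative f) ∉ p := by
  obtain ⟨f, hf, hfr⟩ := Algebra.IsIntegral.isIntegral (R := A) r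
  by_contra! hder
  have hmem (j : ℕ) : aeval r (derivative^[j] f) ∈ p := by
    induction j with
    | zero => exact (congrArg (· ∈ p) hfr).mpr p.zero_mem
    | succ j ih =>
      rw [Function.iterate_succ_apply']
      exact hder _ ih
  have hlast : derivative^[f.natDegree] f = (f.natDegree.factorial : A[X]) := by
    ext m
    rw [coeff_iterate_derivative, coeff_natCast_ite]
    rcases m.eq_zero_or_pos with rfl | hm
    · simp [hf.coeff_natDegree, Nat.descFactorial_self]
    · rw [coeff_eq_zero_of_natDegree_lt (by lia), smul_zero, if_neg hm.ne', Nat.cast_zero]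
  have := hmem f.natDegree
  rw [hlast, map_natCast, ← Ideal.Quotient.eq_zero_iff_mem, map_natCast, Nat.cast_eq_zero] at this
  exact Nat.factorial_ne_zero _ this

theorem derivation_apply_eq_zero_of_isIntegral {k A R M : Type*} [CommRing k] [CommRing A]
    [CommRing R] [Algebra k R] [Algebra A R] [Algebra.IsIntegral A R] [AddCommGroup M] [Module R M]
    [Module k M] (p : Ideal R) [p.IsPrime] [CharZero (R ⧸ p)] (D : Derivation k R M)
    (hA : ∀ a, D (algebraMap A R a) = 0) (hp : ∀ r ∈ p, D r = 0)
    (hM : ∀ r ∉ p, ∀ x : M, r • x = 0 → x = 0) (r : R) : D r = 0 := by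
  let _ : Module A M := Module.compHom M (algebraMap A R)
  have : IsScalarTower A R M := .of_algebraMap_smul fun _ _ => rfl
  let D' : Derivation A R M :=
    { toFun := D
      map_add' := D.map_add
      map_smul' a r := by
        rw [Algebra.smul_def, D.leibniz, hA, smul_zero, add_zero, RingHom.id_apply,
          algebraMap_smul]
      map_one_eq_zero' := D.map_one_eq_zero
      leibniz' := D.leibniz }
  obtain ⟨f, hf, hf'⟩ := exists_aeval_mem_aeval_derivative_notMem (A := A) p r
  exact hM _ hf' _ ((D'.map_aeval f r).symm.trans (hp _ hf))

open MvPolynomial in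
theorem exists_pderiv_ne_zero_totalDegree_lt {k σ : Type*} [Field k] [CharZero k]
    {g : MvPolynomial σ k} (hg : g.totalDegree ≠ 0) :
    ∃ i, pderiv i g ≠ 0 ∧ (pderiv i g).totalDegree < g.totalDegree := by
  have hg0 : g ≠ 0 := fun h => hg (h ▸ totalDegree_zero)
  obtain ⟨μ, hμ, hμd⟩ := Finset.exists_mem_eq_sup g.support (support_nonempty.2 hg0)
    Finsupp.degree
  obtain ⟨i, hi⟩ : ∃ i, μ i ≠ 0 := by
    by_contra! h
    exact hg (hμd.trans ((Finsupp.degree_eq_zero_iff μ).2 (Finsupp.ext h)))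
  refine ⟨i, fun h => ?_, (Finset.sup_lt_iff (Nat.pos_of_ne_zero hg)).2 fun m hm => ?_⟩
  · have hcoeff := coeff_pderiv g (i := i) (μ - Finsupp.single i 1)
    rw [h, tsub_add_cancel_of_le (by simpa [Nat.one_le_iff_ne_zero] using hi), coeff_zero] at hcoeff
    exact mul_ne_zero (mem_support_iff.1 hμ) (Nat.cast_add_one_ne_zero _) hcoeff.symm
  · have hmi : m + Finsupp.single i 1 ∈ g.support := mem_support_iff.2 fun h => by
      rw [mem_support_iff, coeff_pderiv, h, zero_mul] at hm
      exact hm rfl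
    have hle := le_totalDegree hmi
    change Finsupp.degree (m + Finsupp.single i 1) ≤ _ at hle
    rw [map_add, Finsupp.degree_single] at hle
    exact hle

open MvPolynomial in
theorem exists_pderiv_notMem {k σ : Type*} [Field k] [CharZero k] {I : Ideal (MvPolynomial σ k)}
    (hI : I ≠ ⊥) (htop : I ≠ ⊤) : ∃ g ∈ I, ∃ i, pderiv i g ∉ I := by
  by_contra! h
  obtain ⟨g, hg, hg0⟩ := Submodule.exists_mem_ne_zero_of_ne_bot hI
  induction hn : g.totalDegree using Nat.strong_induction_on generalizing g with
  | _ n ih =>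
    by_cases hdeg : g.totalDegree = 0
    · obtain ⟨c, rfl⟩ : ∃ c, g = C c := ⟨_, totalDegree_eq_zero_iff_eq_C.1 hdeg⟩
      refine htop (I.eq_top_of_isUnit_mem hg ((IsUnit.mk0 c ?_).map C))
      rintro rfl
      exact hg0 C_0
    · obtain ⟨i, hi, hlt⟩ := exists_pderiv_ne_zero_totalDegree_lt hdeg
      exact ih _ (hn ▸ hlt) _ (h g hg i) hi rfl

/-- Otherwise some nonzero element of `H` would lie in every power of the maximal ideal. -/
theorem exists_mem_isUnit_of_forall_exists_eq_mul {R : Type*} [CommRing R] [IsDomain R]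
    [IsNoetherianRing R] [IsLocalRing R] {a : R} {H : Set R} (ha : ¬ IsUnit a) (hH : ∃ h ∈ H, h ≠ 0)
    (hstep : ∀ h ∈ H, ¬ IsUnit h → ∃ h' ∈ H, h = a * h') : ∃ h ∈ H, IsUnit h := by
  by_contra! hnot
  have hpow (n : ℕ) : ∀ h ∈ H, h ∈ IsLocalRing.maximalIdeal R ^ n := by
    induction n with
    | zero => simp
    | succ n ih =>
      intro h hh
      obtain ⟨h', hh', rfl⟩ := hstep h hh (hnot h hh)
      rw [pow_succ']
      exact Ideal.mul_mem_mul ha (ih h' hh')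
  obtain ⟨h, hh, h0⟩ := hH
  refine h0 ((Submodule.mem_bot R).1 ?_)
  rw [← Ideal.iInf_pow_eq_bot_of_isLocalRing (IsLocalRing.maximalIdeal R)
    (IsLocalRing.maximalIdeal.isMaximal R).ne_top, Ideal.mem_iInf]
  exact fun n => hpow n h hh

section FiniteOverPolynomials

variable {k σ R : Type*} [Field k] [CommRing R] [Algebra k R]

open IsLocalRing in
theorem derivation_apply_mem_maximalIdeal [CharZero k] {A : Type*} [CommRing A] [Algebra A R]
    [Algebra.IsIntegral A R] (p : Ideal R) [p.IsPrime]
    (D : Derivation k R (Localization.AtPrime p))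
    (hA : ∀ a : A, D (algebraMap A R a) ∈ maximalIdeal (Localization.AtPrime p))
    (hp : ∀ r ∈ p, D r ∈ maximalIdeal (Localization.AtPrime p)) (r : R) :
    D r ∈ maximalIdeal (Localization.AtPrime p) := by
  let V := Localization.AtPrime p
  have : CharZero (R ⧸ p) := charZero_of_injective_algebraMap (algebraMap k (R ⧸ p)).injective
  let π : V →ₗ[R] ResidueField V := (IsScalarTower.toAlgHom R V (ResidueField V)).toLinearMap
  have hπ (x : V) : π x = 0 ↔ x ∈ maximalIdeal V := residue_eq_zero_iff x
  refine (hπ _).1 (derivation_apply_eq_zero_of_isIntegral p (π.compDer D)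
    (fun a => (hπ _).2 (hA a)) (fun r hr => (hπ _).2 (hp r hr)) (fun r hr x hx => ?_) r)
  rw [Algebra.smul_def, mul_eq_zero] at hx
  refine hx.resolve_left fun h0 => hr ?_
  rw [IsScalarTower.algebraMap_apply R V] at h0
  exact (IsLocalization.AtPrime.to_map_mem_maximal_iff V p r).1 ((residue_eq_zero_iff _).1 h0)

variable [CharZero k] [IsDomain R] [Algebra (MvPolynomial σ k) R]
  [IsScalarTower k (MvPolynomial σ k) R]

open IsLocalRing in
/-- Among the derivations extending a multiple `h ∂ᵢ`, one with `h` of minimal valuation has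
`h` a unit: otherwise it maps `R` into the maximal ideal and can be divided by a uniformizer. -/
theorem exists_derivation_localization_notMem [FaithfulSMul (MvPolynomial σ k) R]
    [Algebra.IsIntegral (MvPolynomial σ k) R] [Algebra.EssFiniteType k R] (p : Ideal R) [p.IsPrime]
    [IsDiscreteValuationRing (Localization.AtPrime p)] :
    ∃ D : Derivation k R (Localization.AtPrime p), ∃ z ∈ p, D z ∉ maximalIdeal _ := by
  let V := Localization.AtPrime p
  by_contra! hstable
  have hcomap : p.comap (algebraMap (MvPolynomial σ k) R) ≠ ⊥ := by
    have hp : p ≠ ⊥ := fun h => by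
      have := height_eq_one_of_isDiscreteValuationRing p
      simp [h] at this
    obtain ⟨r, hr, hr0⟩ := Submodule.exists_mem_ne_zero_of_ne_bot hp
    exact Ideal.comap_ne_bot_of_integral_mem hr0 hr (Algebra.IsIntegral.isIntegral r)
  obtain ⟨g, hg, i, hgi⟩ := exists_pderiv_notMem hcomap (Ideal.comap_ne_top _ Ideal.IsPrime.ne_top')
  let H : Set V := {h | ∃ D : Derivation k R V, ∀ q : MvPolynomial σ k,
    D (algebraMap _ R q) = h * algebraMap R V (algebraMap _ R (MvPolynomial.pderiv i q))}
  have hH : ∃ h ∈ H, h ≠ 0 := by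
    obtain ⟨τ, hτ, d, hd⟩ := exists_derivation_extending_mul (T := R)
      (MvPolynomial.pderiv (R := k) i)
    refine ⟨algebraMap R V τ, ⟨(Algebra.linearMap R V).compDer d, fun q => ?_⟩,
      by simpa [V] using hτ⟩
    rw [← map_mul, ← hd]
    rfl
  obtain ⟨ϖ, hϖ⟩ := IsDiscreteValuationRing.exists_irreducible V
  obtain ⟨h, ⟨D, hD⟩, hunit⟩ := exists_mem_isUnit_of_forall_exists_eq_mul hϖ.not_isUnit hH <| by
    rintro h ⟨D, hD⟩ hh
    have hmem (r : R) : D r ∈ maximalIdeal V :=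
      derivation_apply_mem_maximalIdeal p D
        (fun q : MvPolynomial σ k => (hD q).symm ▸ Ideal.mul_mem_right _ _ hh) (hstable D) r
    have hdvd : ∀ x ∈ maximalIdeal V, ∃ y, ϖ * y = x := fun x hx => by
      rw [hϖ.maximalIdeal_eq, Ideal.mem_span_singleton'] at hx
      simpa only [mul_comm] using hx
    obtain ⟨D', hD'⟩ := exists_derivation_of_forall_mem_range (LinearMap.mulLeft R ϖ)
      (mul_right_injective₀ hϖ.ne_zero) D fun r => hdvd _ (hmem r)
    obtain ⟨h', rfl⟩ := hdvd h hh
    refine ⟨h', ⟨D', fun q => mul_left_cancel₀ hϖ.ne_zero ?_⟩, rfl⟩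
    rw [← mul_assoc, ← hD]
    exact hD' _
  have hDg := hstable D _ hg
  rw [hD, Ideal.unit_mul_mem_iff_mem _ hunit,
    IsLocalization.AtPrime.to_map_mem_maximal_iff V p] at hDg
  exact hgi hDg

theorem exists_derivation_notMem [FaithfulSMul (MvPolynomial σ k) R]
    [Algebra.IsIntegral (MvPolynomial σ k) R] [Algebra.EssFiniteType k R] (p : Ideal R) [p.IsPrime]
    [IsDiscreteValuationRing (Localization.AtPrime p)] :
    ∃ d : Derivation k R R, ∃ z ∈ p, d z ∉ p := by
  obtain ⟨D, z, hz, hDz⟩ := exists_derivation_localization_notMem (k := k) (σ := σ) p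
  obtain ⟨τ, hτ, d, hd⟩ := exists_derivation_algebraMap_eq_mul p.primeCompl D
  refine ⟨d, z, hz, fun hdz => hDz ?_⟩
  rw [← IsLocalization.AtPrime.to_map_mem_maximal_iff (Localization.AtPrime p) p, hd] at hdz
  exact (Ideal.unit_mul_mem_iff_mem _ (IsLocalization.map_units _ ⟨τ, hτ⟩)).1 hdz

end FiniteOverPolynomials

/-- The powers of `z` are consumed one at a time: `d (w z ^ (n + 1))` is `z ^ n` times a unit
at `p`. -/
theorem exists_notMem_mem_of_mul_pow_mem {k R : Type*} [CommRing k] [CommRing R] [Algebra k R]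
    {p J : Ideal R} [p.IsPrime] [CharZero (R ⧸ p)] (d : Derivation k R R) (hJ : ∀ r ∈ J, d r ∈ J)
    {z : R} (hz : z ∈ p) (hdz : d z ∉ p) {n : ℕ} {w : R} (hw : w ∉ p) (hwz : w * z ^ n ∈ J) :
    ∃ w ∉ p, w ∈ J := by
  induction n generalizing w with
  | zero => exact ⟨w, hw, by simpa using hwz⟩
  | succ n ih =>
    refine ih (w := (n + 1 : ℕ) * (w * d z) + d w * z) (fun h => ?_) ?_
    · rw [p.add_mem_iff_left (p.mul_mem_left _ hz), ‹p.IsPrime›.mul_mem_iff_mem_or_mem,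
        ← Ideal.Quotient.eq_zero_iff_mem, map_natCast, Nat.cast_eq_zero] at h
      exact (‹p.IsPrime›.mul_notMem hw hdz) (h.resolve_left n.succ_ne_zero)
    · have := hJ _ hwz
      rw [d.leibniz, d.leibniz_pow] at this
      convert this using 1
      simp only [smul_eq_mul, nsmul_eq_mul, Nat.add_sub_cancel]
      ring

theorem exists_notMem_dvd_mul_pow {R : Type*} [CommRing R] [IsDomain R] [IsNoetherianRing R]
    (p : Ideal R) [p.IsPrime] [ValuationRing (Localization.AtPrime p)] {j z : R} (hj : j ≠ 0)
    (hz : z ∈ p) : ∃ w ∉ p, ∃ n, j ∣ w * z ^ n := by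
  let V := Localization.AtPrime p
  by_contra! hnot
  refine hj (FaithfulSMul.algebraMap_injective R V ?_)
  rw [map_zero, ← Submodule.mem_bot V, ← Ideal.iInf_pow_eq_bot_of_isLocalRing
    (IsLocalRing.maximalIdeal V) (IsLocalRing.maximalIdeal.isMaximal V).ne_top, Ideal.mem_iInf]
  intro n
  obtain ⟨u, hu, h | ⟨x, hx⟩⟩ := exists_notMem_dvd_mul_or_dvd_mul p j (z ^ n)
  · exact absurd h (hnot u hu n)
  · have hzn : algebraMap R V (z ^ n) ∈ IsLocalRing.maximalIdeal V ^ n := by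
      rw [map_pow]
      exact Ideal.pow_mem_pow ((IsLocalization.AtPrime.to_map_mem_maximal_iff V p z).2 hz) n
    rw [← Ideal.unit_mul_mem_iff_mem _ (IsLocalization.map_units V (⟨u, hu⟩ : p.primeCompl)),
      ← map_mul, hx, map_mul]
    exact Ideal.mul_mem_right _ _ hzn

theorem not_le_of_derivation_mem {k σ R : Type*} [Field k] [CharZero k] [CommRing R] [IsDomain R]
    [Algebra k R] [Algebra (MvPolynomial σ k) R] [IsScalarTower k (MvPolynomial σ k) R]
    [FaithfulSMul (MvPolynomial σ k) R] [Algebra.IsIntegral (MvPolynomial σ k) R]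
    [Algebra.EssFiniteType k R] {J : Ideal R} (hJ : J ≠ ⊥)
    (hd : ∀ d : Derivation k R R, ∀ r ∈ J, d r ∈ J) (p : Ideal R) [p.IsPrime]
    [IsDiscreteValuationRing (Localization.AtPrime p)] : ¬ J ≤ p := by
  have : CharZero (R ⧸ p) := charZero_of_injective_algebraMap (algebraMap k (R ⧸ p)).injective
  have : IsNoetherianRing R := Algebra.EssFiniteType.isNoetherianRing k R
  obtain ⟨d, z, hz, hdz⟩ := exists_derivation_notMem (k := k) (σ := σ) p
  obtain ⟨j, hj, hj0⟩ := Submodule.exists_mem_ne_zero_of_ne_bot hJ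
  obtain ⟨w, hw, n, hjw⟩ := exists_notMem_dvd_mul_pow p hj0 hz
  obtain ⟨v, hv, hvJ⟩ := exists_notMem_mem_of_mul_pow_mem d (hd d) hz hdz hw
    (J.mem_of_dvd hjw hj)
  exact fun h => hv (h hvJ)

end Derivations

section FlatBaseChange

variable {R C : Type*} [CommRing R] [CommRing C] [Algebra R C]

theorem mem_map_colon_of_flat [Module.Flat R C] {I : Ideal R} {s : R} {x : C}
    (h : algebraMap R C s * x ∈ I.map (algebraMap R C)) :
    x ∈ (I.colon {s}).map (algebraMap R C) := by
  obtain ⟨t, ht, c, hc⟩ := (Submodule.mem_span_image_iff_exists_fun C).1 h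
  have hrel : ∑ j : Option t, (j.elim (-s) (·.1) : R) • (j.elim x c : C) = 0 := by
    rw [Fintype.sum_option]
    simp only [Option.elim, Algebra.smul_def, map_neg, neg_mul]
    exact neg_add_eq_zero.2 (hc.symm.trans (Finset.sum_congr rfl fun j _ => mul_comm _ _))
  obtain ⟨l, a, y, hxy, ha⟩ :=
    Module.Flat.isTrivialRelation_of_sum_smul_eq_zero (R := R) (M := C) hrel
  rw [show x = _ from hxy none]
  refine Ideal.sum_mem _ fun j _ => ?_
  rw [Algebra.smul_def]
  refine Ideal.mul_mem_right _ _ (Ideal.mem_map_of_mem _ (Submodule.mem_colon_singleton.2 ?_))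
  have haj := ha j
  simp only [Fintype.sum_option, Option.elim, neg_mul, neg_add_eq_zero] at haj
  rw [smul_eq_mul, mul_comm, haj]
  exact Ideal.sum_mem _ fun i _ => Ideal.mul_mem_right _ _ (ht i.2)

/-- An ideal in no associated prime of `R ⧸ (s)` contains a nonzerodivisor modulo `s`. -/
theorem exists_mem_colon_singleton_eq_of_not_le [IsNoetherianRing R] {J : Ideal R} {s : R}
    (hJ : ∀ r, ((Ideal.span {s}).colon {r}).IsPrime → ¬ J ≤ (Ideal.span {s}).colon {r}) :
    ∃ t ∈ J, (Ideal.span {s}).colon {t} = Ideal.span {s} := by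
  have hmk (r a : R) : r • Ideal.Quotient.mk (Ideal.span {s}) a = 0 ↔
      r * a ∈ Ideal.span {s} := by
    rw [Algebra.smul_def, Ideal.Quotient.algebraMap_eq, ← map_mul, Ideal.Quotient.eq_zero_iff_mem]
  by_contra! hzero
  have hsub : (J : Set R) ⊆ ⋃ p ∈ associatedPrimes R (R ⧸ Ideal.span {s}), (p : Set R) := by
    rw [biUnion_associatedPrimes_eq_zero_divisors]
    intro t ht
    obtain ⟨a, hat, ha⟩ := SetLike.exists_of_lt <| lt_of_le_of_ne
      (fun r hr => Submodule.mem_colon_singleton.2 (Ideal.mul_mem_right _ _ hr)) (hzero t ht).symm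
    rw [Submodule.mem_colon_singleton, smul_eq_mul, mul_comm] at hat
    exact ⟨Ideal.Quotient.mk _ a, mt Ideal.Quotient.eq_zero_iff_mem.1 ha, (hmk t a).2 hat⟩
  obtain ⟨p, hp, hle⟩ := (Ideal.subset_union_prime_finite
    (associatedPrimes.finite R (R ⧸ Ideal.span {s})) ⊤ ⊤ (fun p hp _ _ => hp.isPrime)).1 hsub
  obtain ⟨hpp, x, hx⟩ := Submodule.isAssociatedPrime_iff.1 hp
  obtain ⟨a, rfl⟩ := Ideal.Quotient.mk_surjective x
  obtain rfl : p = (Ideal.span {s}).colon {a} := by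
    ext r
    rw [hx, Submodule.mem_colon_singleton, Submodule.mem_bot, hmk, Submodule.mem_colon_singleton,
      smul_eq_mul]
  exact hJ a hpp hle

/-- Let `z + ε` and `z' + ε'` be the decompositions of `s` and `t` in `K + Ann K`. Then
`s ε' = t ε`, so `ε` is divisible by `s`, and the quotient is the idempotent sought. -/
theorem exists_sub_one_mem_mul_eq_zero [IsDomain R] [Module.Flat R C] {K : Ideal C}
    (hK : ∀ s : R, s ≠ 0 → ∀ x, algebraMap R C s * x ∈ K → x ∈ K) {s t : R} (hs0 : s ≠ 0)
    (hs : algebraMap R C s ∈ K ⊔ K.annihilator) (ht : algebraMap R C t ∈ K ⊔ K.annihilator)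
    (hst : (Ideal.span {s}).colon {t} = Ideal.span {s}) :
    ∃ e : C, e - 1 ∈ K ∧ ∀ z ∈ K, e * z = 0 := by
  obtain ⟨z, hz, ε, hε, hzε⟩ := Submodule.mem_sup.1 hs
  obtain ⟨z', hz', ε', hε', hzε'⟩ := Submodule.mem_sup.1 ht
  simp only [Submodule.mem_annihilator, smul_eq_mul] at hε hε'
  have hmul : algebraMap R C t * ε = algebraMap R C s * ε' := by
    rw [← hzε, ← hzε', add_mul, add_mul, mul_comm z', hε _ hz', mul_comm z, hε' _ hz,
      zero_add, zero_add, mul_comm]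
  obtain ⟨e, rfl⟩ : algebraMap R C s ∣ ε := by
    have hε : ε ∈ ((Ideal.span {s}).colon {t}).map (algebraMap R C) := by
      refine mem_map_colon_of_flat ?_
      rw [hmul]
      exact Ideal.mul_mem_right _ _ (Ideal.mem_map_of_mem _ (Ideal.mem_span_singleton_self s))
    rwa [hst, Ideal.map_span, Set.image_singleton, Ideal.mem_span_singleton] at hε
  have hreg {x : C} (hx : algebraMap R C s * x = 0) : x = 0 := by
    have hcolon : (⊥ : Ideal R).colon {s} = ⊥ := by
      ext r
      simp [Submodule.mem_colon_singleton, hs0]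
    have hx : x ∈ ((⊥ : Ideal R).colon {s}).map (algebraMap R C) :=
      mem_map_colon_of_flat (by rw [hx]; exact Ideal.zero_mem _)
    rwa [hcolon, Ideal.map_bot, Ideal.mem_bot] at hx
  refine ⟨e, hK s hs0 _ ?_, fun w hw => hreg ?_⟩
  · rw [mul_sub, mul_one, ← neg_sub, ← eq_sub_of_add_eq hzε]
    exact K.neg_mem hz
  · rw [← mul_assoc, hε _ hw]

end FlatBaseChange

section CompletionKernel

/-- The intersection over `n` of the ideals of `C` generated by the contractions to `R` of `m ^ n`.
When `C` is the completion of `R` at an ideal contained in the contraction of `m`, it is the kernel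
of the map from `C` to the `m`-adic completion of `T`. -/
def completionKernel (R C : Type*) [CommRing R] [CommRing C] [Algebra R C] {T : Type*} [CommRing T]
    [Algebra R T] (m : Ideal T) : Ideal C :=
  ⨅ n, ((m ^ n).comap (algebraMap R T)).map (algebraMap R C)

variable {R C T : Type*} [CommRing R] [CommRing C] [Algebra R C] [CommRing T] [Algebra R T]

theorem mem_completionKernel {m : Ideal T} {x : C} : x ∈ completionKernel R C m ↔
    ∀ n, x ∈ ((m ^ n).comap (algebraMap R T)).map (algebraMap R C) :=
  Ideal.mem_iInf

theorem derivation_mem_pow {k : Type*} [CommRing k] [Algebra k T] (d : Derivation k T T)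
    (m : Ideal T) (n : ℕ) {y : T} (hy : y ∈ m ^ (n + 1)) : d y ∈ m ^ n := by
  induction n generalizing y with
  | zero => simp
  | succ n ih =>
    rw [pow_succ] at hy
    induction hy using Submodule.mul_induction_on' with
    | mem_mul_mem a ha b hb =>
      rw [d.leibniz, smul_eq_mul, smul_eq_mul]
      refine Ideal.add_mem _ (Ideal.mul_mem_right _ _ ha) ?_
      rw [pow_succ']
      exact Ideal.mul_mem_mul hb (ih ha)
    | add a _ b _ ha hb =>
      rw [map_add]
      exact Ideal.add_mem _ ha hb

theorem exists_forall_mem_pow_of_mul_mem_pow [IsDomain T] [IsNoetherianRing T] (m : Ideal T) {τ : T}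
    (hτ : τ ≠ 0) : ∃ c, ∀ n y, τ * y ∈ m ^ (n + c) → y ∈ m ^ n := by
  obtain ⟨c, hc⟩ := Ideal.exists_pow_inf_eq_pow_smul m (Ideal.span {τ})
  refine ⟨c, fun n y hy => ?_⟩
  have hinf : τ * y ∈ m ^ (n + c) • (⊤ : Submodule T T) ⊓ Ideal.span {τ} :=
    ⟨by simpa using hy, Ideal.mul_mem_right _ _ (Ideal.mem_span_singleton_self τ)⟩
  rw [hc (n + c) (Nat.le_add_left c n), Nat.add_sub_cancel] at hinf
  have hspan : τ * y ∈ m ^ n * Ideal.span {τ} := Submodule.smul_mono le_rfl inf_le_right hinf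
  obtain ⟨z, hz, hzy⟩ := Ideal.mem_mul_span_singleton.1 hspan
  rw [mul_comm] at hzy
  exact mul_left_cancel₀ hτ hzy ▸ hz

theorem mem_completionKernel_of_mul_mem [Module.Flat R C] [IsDomain T] [IsNoetherianRing T]
    [FaithfulSMul R T] {m : Ideal T} {s : R} (hs : s ≠ 0) {x : C}
    (hx : algebraMap R C s * x ∈ completionKernel R C m) : x ∈ completionKernel R C m := by
  have hs : algebraMap R T s ≠ 0 :=
    (map_ne_zero_iff _ (FaithfulSMul.algebraMap_injective R T)).2 hs
  obtain ⟨c, hc⟩ := exists_forall_mem_pow_of_mul_mem_pow m hs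
  rw [mem_completionKernel] at hx ⊢
  intro n
  refine Ideal.map_mono (fun r hr => hc n (algebraMap R T r) ?_)
    (mem_map_colon_of_flat (hx (n + c)))
  rw [Submodule.mem_colon_singleton, Ideal.mem_comap, smul_eq_mul, mul_comm, map_mul] at hr
  exact hr

theorem derivation_mem_completionKernel {k : Type*} [Field k] [CharZero k] [Algebra k R]
    [IsDomain R] [IsDomain T] [Algebra k T] [IsScalarTower k R T] [Algebra.EssFiniteType k T]
    [FaithfulSMul R T] {m : Ideal T} (δ : Derivation k R R) (δ' : Derivation ℤ C C)
    (h : ∀ r, δ' (algebraMap R C r) = algebraMap R C (δ r)) {x : C}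
    (hx : x ∈ completionKernel R C m) : δ' x ∈ completionKernel R C m := by
  have : CharZero R := charZero_of_injective_algebraMap (algebraMap k R).injective
  have : IsNoetherianRing T := Algebra.EssFiniteType.isNoetherianRing k T
  obtain ⟨τ, hτ, d, hd⟩ := exists_derivation_extending_mul (T := T) δ
  obtain ⟨c, hc⟩ := exists_forall_mem_pow_of_mul_mem_pow m hτ
  have hδ (n : ℕ) {r : R} (hr : algebraMap R T r ∈ m ^ (n + c + 1)) :
      algebraMap R T (δ r) ∈ m ^ n :=
    hc n _ (hd r ▸ derivation_mem_pow d m _ hr)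
  rw [mem_completionKernel] at hx ⊢
  intro n
  specialize hx (n + c + 1)
  induction hx using Submodule.span_induction with
  | zero => simp
  | add x y _ _ hx hy => exact (map_add δ' x y).symm ▸ Ideal.add_mem _ hx hy
  | mem x hx =>
    obtain ⟨r, hr, rfl⟩ := hx
    exact (h r).symm ▸ Ideal.mem_map_of_mem _ (hδ n hr)
  | smul a x hx ih =>
    rw [smul_eq_mul, δ'.leibniz]
    refine Ideal.add_mem _ (Ideal.mul_mem_left _ _ ih) (Ideal.mul_mem_right _ _ ?_)
    exact Ideal.map_mono (Ideal.comap_mono (Ideal.pow_le_pow_right (by lia))) hx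

end CompletionKernel

section AnnihilatorSum

theorem exists_mem_sup_annihilator_mem_nonZeroDivisors {B : Type*} [CommRing B] [IsNoetherianRing B]
    [IsReduced B] (I : Ideal B) : ∃ z ∈ I ⊔ I.annihilator, z ∈ nonZeroDivisors B := by
  by_contra! hzero
  have hsub : ((I ⊔ I.annihilator : Ideal B) : Set B) ⊆
      ⋃ p ∈ associatedPrimes B B, (p : Set B) := by
    rw [biUnion_associatedPrimes_eq_compl_nonZeroDivisors]
    exact hzero
  obtain ⟨p, hp, hle⟩ := (Ideal.subset_union_prime_finite (associatedPrimes.finite B B) ⊤ ⊤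
    (fun p hp _ _ => hp.isPrime)).1 hsub
  obtain ⟨hpp, x, rfl⟩ := Submodule.isAssociatedPrime_iff.1 hp
  have hx (z : B) (hz : z ∈ I ⊔ I.annihilator) : z * x = 0 :=
    (Submodule.mem_bot B).1 (Submodule.mem_colon_singleton.1 (hle hz))
  have hxI : x ∈ I.annihilator := Submodule.mem_annihilator.2 fun y hy => by
    rw [smul_eq_mul, mul_comm]
    exact hx y (Ideal.mem_sup_left hy)
  have hx0 : x = 0 :=
    IsNilpotent.eq_zero ⟨2, by rw [pow_two, hx x (Ideal.mem_sup_right hxI)]⟩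
  exact hpp.ne_top ((Ideal.eq_top_iff_one _).2 (by simp [hx0]))

theorem derivation_mem_sup_annihilator {k B : Type*} [CommRing k] [CommRing B] [Algebra k B]
    {I : Ideal B} {δ : Derivation k B B} (h : ∀ z ∈ I, δ z ∈ I) {z : B}
    (hz : z ∈ I ⊔ I.annihilator) : δ z ∈ I ⊔ I.annihilator := by
  obtain ⟨x, hx, y, hy, rfl⟩ := Submodule.mem_sup.1 hz
  rw [map_add]
  refine Ideal.add_mem _ (Ideal.mem_sup_left (h x hx)) (Ideal.mem_sup_right ?_)
  simp only [Submodule.mem_annihilator, smul_eq_mul] at hy ⊢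
  intro w hw
  have hyw := congrArg δ (hy w hw)
  rw [δ.leibniz, map_zero, smul_eq_mul, smul_eq_mul, hy _ (h w hw), zero_add] at hyw
  rw [mul_comm, hyw]

end AnnihilatorSum

section Prolongation

open TensorProduct

attribute [local instance] Algebra.TensorProduct.rightAlgebra

theorem exists_derivation_tensorProduct {k₁ k₂ A R B : Type*} [CommRing k₁] [CommRing k₂]
    [CommRing A] [CommRing R] [CommRing B] [Algebra A R] [Algebra A B] [Algebra k₁ R]
    [Algebra k₂ B] [Module k₁ (R ⊗[A] B)] [Module k₂ (R ⊗[A] B)]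
    (d₁ : Derivation k₁ R (R ⊗[A] B)) (d₂ : Derivation k₂ B (R ⊗[A] B))
    (h : ∀ a, d₁ (algebraMap A R a) = d₂ (algebraMap A B a)) :
    ∃ d : Derivation ℤ (R ⊗[A] B) (R ⊗[A] B), ∀ r b, d (r ⊗ₜ b) = b • d₁ r + r • d₂ b := by
  let f : R →+ B →+ R ⊗[A] B :=
    AddMonoidHom.mk' (fun r => AddMonoidHom.mk' (fun b => b • d₁ r + r • d₂ b)
      fun b b' => by simp only [map_add, add_smul, smul_add]; abel)
      fun r r' => by
        ext b
        simp only [map_add, add_smul, smul_add, AddMonoidHom.mk'_apply, AddMonoidHom.add_apply]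
        abel
  let g := TensorProduct.liftAddHom f fun (a : A) (r : R) (b : B) => by
    change b • d₁ (a • r) + (a • r) • d₂ b = (a • b) • d₁ r + r • d₂ (a • b)
    simp only [Algebra.smul_def, Derivation.leibniz, map_mul, h,
      ← IsScalarTower.algebraMap_apply]
    ring
  have hg (r : R) (b : B) : g (r ⊗ₜ b) = b • d₁ r + r • d₂ b := TensorProduct.liftAddHom_tmul ..
  refine ⟨Derivation.mk' g.toIntLinearMap fun x y => ?_, hg⟩
  change g (x * y) = x * g y + y * g x
  induction x with
  | zero => simp
  | add x x' hx hx' => rw [add_mul, map_add, hx, hx', map_add]; ring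
  | tmul r b =>
    induction y with
    | zero => simp
    | add y y' hy hy' => rw [mul_add, map_add, hy, hy', map_add]; ring
    | tmul r' b' =>
      have htmul (r : R) (b : B) : r ⊗ₜ[A] b = algebraMap R _ r * algebraMap B _ b := by
        simp [Algebra.TensorProduct.algebraMap_apply, Algebra.TensorProduct.right_algebraMap_apply]
      rw [Algebra.TensorProduct.tmul_mul_tmul, hg, hg, hg, htmul, htmul]
      simp only [Derivation.leibniz, Algebra.smul_def, map_mul]
      ring

end Prolongation

section PowerSeries

open TensorProduct

/-- A power series with nonzero coefficient at a monomial of minimal degree becomes a unit after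
differentiating along that monomial. -/
theorem eq_top_of_pderiv_mem {k σ : Type*} [Field k] [CharZero k] {I : Ideal (MvPowerSeries σ k)}
    (hI : ∀ i, ∀ c ∈ I, MvPowerSeries.pderiv k i c ∈ I) (hI0 : I ≠ ⊥) : I = ⊤ := by
  obtain ⟨c, hc, hc0⟩ := Submodule.exists_mem_ne_zero_of_ne_bot hI0
  obtain ⟨μ, hμ⟩ : ∃ μ, MvPowerSeries.coeff μ c ≠ 0 := by
    by_contra! h
    exact hc0 (MvPowerSeries.ext fun μ => by rw [h μ, map_zero])
  clear hc0
  induction hn : μ.degree generalizing μ c with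
  | zero =>
    obtain rfl := (Finsupp.degree_eq_zero_iff μ).1 hn
    exact Ideal.eq_top_of_isUnit_mem _ hc <| MvPowerSeries.isUnit_iff_constantCoeff.2 <|
      IsUnit.mk0 _ (by rwa [← MvPowerSeries.coeff_zero_eq_constantCoeff_apply])
  | succ n ih =>
    obtain ⟨i, hi⟩ := Finsupp.ne_iff.1 (show μ ≠ 0 by rintro rfl; simp at hn)
    have hadd : μ - Finsupp.single i 1 + Finsupp.single i 1 = μ :=
      tsub_add_cancel_of_le (by simpa [Nat.one_le_iff_ne_zero] using hi)
    refine ih _ (hI i c hc) (μ - Finsupp.single i 1) ?_ ?_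
    · rw [MvPowerSeries.coeff_pderiv, hadd]
      exact mul_ne_zero hμ (Nat.cast_add_one_ne_zero _)
    · simpa [hn, Finsupp.degree_single] using congrArg Finsupp.degree hadd

theorem exists_pow_mem_of_mul_pderiv_mem {k σ : Type*} [Field k] [CharZero k]
    {I : Ideal (MvPowerSeries σ k)} (hI0 : I ≠ ⊥) {h : MvPowerSeries σ k}
    (hI : ∀ i, ∀ c ∈ I, h * MvPowerSeries.pderiv k i c ∈ I) : ∃ n, h ^ n ∈ I := by
  let J : Ideal (MvPowerSeries σ k) :=
    { carrier := {c | ∃ n, h ^ n * c ∈ I}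
      zero_mem' := ⟨0, by simp⟩
      add_mem' := by
        rintro a b ⟨m, ha⟩ ⟨n, hb⟩
        refine ⟨m + n, ?_⟩
        rw [show h ^ (m + n) * (a + b) = h ^ n * (h ^ m * a) + h ^ m * (h ^ n * b) by ring]
        exact I.add_mem (I.mul_mem_left _ ha) (I.mul_mem_left _ hb)
      smul_mem' := by
        rintro a b ⟨n, hb⟩
        exact ⟨n, by rw [smul_eq_mul, mul_left_comm]; exact I.mul_mem_left _ hb⟩ }
  have hIJ : I ≤ J := fun c hc => ⟨0, by simpa using hc⟩
  suffices hJ : J = ⊤ by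
    obtain ⟨n, hn⟩ := (Ideal.eq_top_iff_one J).1 hJ
    exact ⟨n, by simpa using hn⟩
  refine eq_top_of_pderiv_mem ?_ (ne_bot_of_le_ne_bot hI0 hIJ)
  rintro i c ⟨n, hc⟩
  refine ⟨n + 1, ?_⟩
  convert I.sub_mem (hI i _ hc) (I.mul_mem_left (n * MvPowerSeries.pderiv k i h) hc) using 1
  rcases n with - | n
  · simp
  · simp only [Derivation.leibniz, Derivation.leibniz_pow, smul_eq_mul, nsmul_eq_mul,
      Nat.add_sub_cancel]
    ring

variable (k σ R : Type*) [Field k] [CommRing R] [Algebra (MvPolynomial σ k) R]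

/-- The base change of `R` along `k[x] → k⟦x⟧`; for `R` finite over `k[x]` it is the completion
of `R` along the ideal generated by the variables. -/
abbrev PowerSeriesBaseChange : Type _ := R ⊗[MvPolynomial σ k] MvPowerSeries σ k

instance flat_mvPowerSeries [Finite σ] : Module.Flat (MvPolynomial σ k) (MvPowerSeries σ k) :=
  have := AdicCompletion.flat_of_isNoetherian (MvPolynomial.idealOfVars σ k)
  .of_linearEquiv (MvPowerSeries.toAdicCompletionAlgEquiv σ k).toLinearEquiv

instance isNoetherianRing_powerSeriesBaseChange [Finite σ] [Module.Finite (MvPolynomial σ k) R] :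
    IsNoetherianRing (PowerSeriesBaseChange k σ R) :=
  have := IsNoetherianRing.of_finite (MvPowerSeries σ k)
    (MvPowerSeries σ k ⊗[MvPolynomial σ k] R)
  isNoetherianRing_of_ringEquiv _
    (Algebra.TensorProduct.comm (MvPolynomial σ k) (MvPowerSeries σ k) R).toRingEquiv

/-- In characteristic zero `R` is generically étale over `k[x]`. -/
instance isReduced_powerSeriesBaseChange [Finite σ] [CharZero k] [IsDomain R]
    [Module.Finite (MvPolynomial σ k) R] [FaithfulSMul (MvPolynomial σ k) R] :
    IsReduced (PowerSeriesBaseChange k σ R) := by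
  let A := MvPolynomial σ k
  let K := FractionRing A
  let L := FractionRing R
  let B := MvPowerSeries σ k
  let E := FractionRing B
  let _ : Algebra K L := FractionRing.liftAlgebra A L
  have : IsScalarTower A K L := FractionRing.isScalarTower_liftAlgebra A L
  have : Module.Flat A L := Module.Flat.trans A K L
  have : Algebra.IsAlgebraic K L := isAlgebraic_of_isFractionRing A R K L
  have : Algebra.EssFiniteType A L := Algebra.EssFiniteType.comp A R L
  have : Algebra.FormallyUnramified A K := .of_isLocalization (nonZeroDivisors A)
  have : Algebra.FormallyUnramified K L := .of_isSeparable K L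
  have : Algebra.FormallyUnramified A L := .comp A K L
  have : IsReduced (E ⊗[A] L) := Algebra.FormallyUnramified.isReduced_of_field E (E ⊗[A] L)
  have : IsReduced (B ⊗[A] R) := isReduced_of_injective
    (Algebra.TensorProduct.map (IsScalarTower.toAlgHom A B E) (IsScalarTower.toAlgHom A R L)) <|
    TensorProduct.map_injective_of_flat_flat' _ _ (IsFractionRing.injective B E)
      (IsFractionRing.injective R L)
  exact isReduced_of_injective (Algebra.TensorProduct.comm A R B)
    (Algebra.TensorProduct.comm A R B).injective

variable {k σ R}

section Derivation

variable [Algebra k R] [IsScalarTower k (MvPolynomial σ k) R]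

theorem derivation_sum_apply {A M ι : Type*} [CommRing A] [Algebra k A] [AddCommGroup M]
    [Module A M] [Module k M] (t : Finset ι) (d : ι → Derivation k A M) (a : A) :
    (∑ i ∈ t, d i) a = ∑ i ∈ t, d i a := by
  rw [← Derivation.coeFnAddMonoidHom_apply (∑ i ∈ t, d i), map_sum, Finset.sum_apply]
  rfl

theorem derivation_algebraMap_mvPolynomial [Fintype σ] (d : Derivation k R R)
    (q : MvPolynomial σ k) : d (algebraMap _ R q) = ∑ i,
      d (algebraMap (MvPolynomial σ k) R (.X i)) * algebraMap _ R (MvPolynomial.pderiv i q) := by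
  classical
  have h : d.compAlgebraMap (MvPolynomial σ k) =
      ∑ i, d (algebraMap (MvPolynomial σ k) R (.X i)) •
        (Algebra.linearMap (MvPolynomial σ k) R).compDer (MvPolynomial.pderiv (R := k) i) := by
    ext j
    simp [MvPolynomial.pderiv_X, derivation_sum_apply, Pi.single_apply, apply_ite]
  simpa [derivation_sum_apply] using Derivation.congr_fun h q

attribute [local instance] Algebra.TensorProduct.rightAlgebra in
theorem exists_derivation_powerSeriesBaseChange [Fintype σ] (d : Derivation k R R) :
    ∃ d' : Derivation ℤ (PowerSeriesBaseChange k σ R) (PowerSeriesBaseChange k σ R),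
      (∀ r, d' (r ⊗ₜ 1) = d r ⊗ₜ 1) ∧ ∀ c, d' (1 ⊗ₜ c) =
        ∑ i, d (algebraMap (MvPolynomial σ k) R (.X i)) ⊗ₜ
          MvPowerSeries.pderiv k i c := by
  let d₁ : Derivation k R (PowerSeriesBaseChange k σ R) :=
    (Algebra.linearMap R _).compDer d
  let f (c : MvPowerSeries σ k) : PowerSeriesBaseChange k σ R :=
    ∑ i, d (algebraMap (MvPolynomial σ k) R (.X i)) ⊗ₜ MvPowerSeries.pderiv k i c
  have hsmul (a c : MvPowerSeries σ k) : a • f c =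
      ∑ i, d (algebraMap (MvPolynomial σ k) R (.X i)) ⊗ₜ (a * MvPowerSeries.pderiv k i c) := by
    simp only [f, Algebra.smul_def, Algebra.TensorProduct.right_algebraMap_apply, Finset.mul_sum,
      Algebra.TensorProduct.tmul_mul_tmul, one_mul]
  let d₂ : Derivation ℤ (MvPowerSeries σ k) (PowerSeriesBaseChange k σ R) := Derivation.mk'
    (AddMonoidHom.mk' f fun a b => by
      simp only [f, map_add, TensorProduct.tmul_add, Finset.sum_add_distrib]).toIntLinearMap
    fun a b => by
      change f (a * b) = a • f b + b • f a
      simp only [hsmul, f, Derivation.leibniz, smul_eq_mul,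
        TensorProduct.tmul_add, Finset.sum_add_distrib]
  have hd₁ (r : R) : d₁ r = d r ⊗ₜ 1 := rfl
  have hd₂ (c) : d₂ c = f c := rfl
  obtain ⟨d', hd'⟩ := exists_derivation_tensorProduct d₁ d₂ fun a => by
    rw [hd₁, hd₂, derivation_algebraMap_mvPolynomial, TensorProduct.sum_tmul]
    refine Finset.sum_congr rfl fun i _ => ?_
    rw [mul_comm, ← Algebra.smul_def, TensorProduct.smul_tmul, Algebra.smul_def, mul_one]
    exact congrArg _ (MvPowerSeries.pderiv_coe ..).symm
  refine ⟨d', fun r => ?_, fun c => ?_⟩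
  · rw [hd', Derivation.map_one_eq_zero, smul_zero, add_zero, one_smul, hd₁]
  · rw [hd', Derivation.map_one_eq_zero, smul_zero, zero_add, one_smul, hd₂]

end Derivation

end PowerSeries

section DerivationStableIdeals

open TensorProduct

theorem comap_ne_bot_of_mem_nonZeroDivisors {B C : Type*} [CommRing B] [Nontrivial B] [CommRing C]
    {f : B →+* C} (hf : f.IsIntegral) {J : Ideal C} {z : C} (hz : z ∈ J)
    (hz₀ : z ∈ nonZeroDivisors C) : J.comap f ≠ ⊥ := by
  obtain ⟨p, hp, hpz⟩ := hf z
  obtain ⟨i, hi, hmem⟩ := Ideal.exists_coeff_ne_zero_mem_comap_of_non_zero_divisor_root_mem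
    (mul_right_mem_nonZeroDivisors_eq_zero_iff hz₀).1 hz hp.ne_zero hpz
  exact (Submodule.ne_bot_iff _).2 ⟨_, hmem, hi⟩

theorem isIntegral_includeRight (A R B : Type*) [CommRing A] [CommRing R] [CommRing B]
    [Algebra A R] [Algebra A B] [Algebra.IsIntegral A R] :
    (Algebra.TensorProduct.includeRight : B →ₐ[A] R ⊗[A] B).toRingHom.IsIntegral := by
  let e : B ⊗[A] R →+* R ⊗[A] B := RingHomClass.toRingHom (Algebra.TensorProduct.comm A B R)
  have he : e.IsIntegral :=
    e.isIntegral_of_surjective (Algebra.TensorProduct.comm A B R).surjective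
  exact RingHom.IsIntegral.trans (algebraMap B (B ⊗[A] R)) e Algebra.IsIntegral.isIntegral he

theorem exists_derivation_extending_algebraMap_mul {k A R : Type*} [CommRing k] [CommRing A]
    [IsDomain A] [CharZero A] [CommRing R] [IsDomain R] [Algebra k A] [Algebra A R] [Algebra k R]
    [IsScalarTower k A R] [FaithfulSMul A R] [Algebra.EssFiniteType k R] [Algebra.IsIntegral A R]
    (d : Derivation k A A) : ∃ η : A, η ≠ 0 ∧ ∃ d' : Derivation k R R,
      ∀ a, d' (algebraMap A R a) = algebraMap A R (η * d a) := by
  obtain ⟨τ, hτ, d', hd'⟩ := exists_derivation_extending_mul (T := R) d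
  obtain ⟨η, hη, hη₀⟩ := Submodule.exists_mem_ne_zero_of_ne_bot <|
    Ideal.comap_ne_bot_of_integral_mem hτ (Ideal.mem_span_singleton_self τ)
      (Algebra.IsIntegral.isIntegral (R := A) τ)
  obtain ⟨ρ, hρ⟩ := Ideal.mem_span_singleton.1 (Ideal.mem_comap.1 hη)
  refine ⟨η, hη₀, ρ • d', fun a => ?_⟩
  rw [Derivation.smul_apply, hd', map_mul, hρ, smul_eq_mul]
  ring

variable {k σ R : Type*} [Field k] [CharZero k] [Finite σ] [CommRing R] [IsDomain R]
  [Algebra (MvPolynomial σ k) R] [FaithfulSMul (MvPolynomial σ k) R]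
  [Algebra.IsIntegral (MvPolynomial σ k) R] [Algebra k R] [IsScalarTower k (MvPolynomial σ k) R]
  [Algebra.EssFiniteType k R]

/-- An ideal stable under the prolonged derivations meets `k⟦x⟧` in an ideal stable under all
`h ∂ᵢ`, where `h` clears the denominators of the extensions of `∂ᵢ` to `R`. -/
theorem comap_algebraMap_powerSeriesBaseChange_ne_bot
    {J : Ideal (PowerSeriesBaseChange k σ R)} {z : PowerSeriesBaseChange k σ R} (hz : z ∈ J)
    (hz₀ : z ∈ nonZeroDivisors (PowerSeriesBaseChange k σ R))
    (hJ : ∀ (d : Derivation k R R)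
      (d' : Derivation ℤ (PowerSeriesBaseChange k σ R) (PowerSeriesBaseChange k σ R)),
      (∀ r, d' (r ⊗ₜ 1) = d r ⊗ₜ 1) → ∀ x ∈ J, d' x ∈ J) :
    J.comap (algebraMap R (PowerSeriesBaseChange k σ R)) ≠ ⊥ := by
  classical
  have := Fintype.ofFinite σ
  let ι : MvPowerSeries σ k →+* PowerSeriesBaseChange k σ R :=
    Algebra.TensorProduct.includeRight.toRingHom
  have hι : ι.IsIntegral := isIntegral_includeRight (MvPolynomial σ k) R _
  have hcoe (q : MvPolynomial σ k) : ι q = algebraMap R _ (algebraMap _ R q) := by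
    refine .trans ?_ (IsScalarTower.algebraMap_apply _ R _ q)
    exact (Algebra.TensorProduct.includeRight (R := MvPolynomial σ k) (A := R)).commutes q
  choose η hη₀ d hd using fun i : σ => exists_derivation_extending_algebraMap_mul (R := R)
    (MvPolynomial.pderiv (R := k) i)
  let h : MvPolynomial σ k := ∏ i, η i
  have hstable (i : σ) (c : MvPowerSeries σ k) (hc : c ∈ J.comap ι) :
      (h : MvPowerSeries σ k) * MvPowerSeries.pderiv k i c ∈ J.comap ι := by
    obtain ⟨d', hd', hd'c⟩ := exists_derivation_powerSeriesBaseChange (σ := σ) (d i)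
    obtain ⟨q, hq⟩ : η i ∣ h := Finset.dvd_prod_of_mem η (Finset.mem_univ i)
    have hηc : (η i : MvPowerSeries σ k) * MvPowerSeries.pderiv k i c ∈ J.comap ι := by
      have hmem := hJ (d i) d' hd' (1 ⊗ₜ c) hc
      rw [hd'c, Finset.sum_eq_single i (fun j _ hj => by simp [hd, MvPolynomial.pderiv_X_of_ne hj])
        (by simp)] at hmem
      rw [Ideal.mem_comap, map_mul, hcoe]
      simpa [hd, ι, Algebra.TensorProduct.algebraMap_apply] using hmem
    rw [hq, MvPolynomial.coe_mul, mul_comm (η i : MvPowerSeries σ k), mul_assoc]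
    exact Ideal.mul_mem_left _ _ hηc
  obtain ⟨n, hn⟩ := exists_pow_mem_of_mul_pderiv_mem
    (comap_ne_bot_of_mem_nonZeroDivisors hι hz hz₀) hstable
  refine (Submodule.ne_bot_iff _).2 ⟨algebraMap (MvPolynomial σ k) R (h ^ n), ?_, ?_⟩
  · rwa [Ideal.mem_comap, ← hcoe, MvPolynomial.coe_pow]
  · rw [map_ne_zero_iff _ (FaithfulSMul.algebraMap_injective _ _)]
    exact pow_ne_zero _ (Finset.prod_ne_zero_iff.2 fun i _ => hη₀ i)

end DerivationStableIdeals

section Limits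

open TensorProduct

theorem isPrecomplete_of_finite {A M : Type*} [CommRing A] [AddCommGroup M] [Module A M]
    [Module.Finite A M] (I : Ideal A) [IsPrecomplete I A] : IsPrecomplete I M := by
  obtain ⟨d, g, hg⟩ := Module.Finite.exists_fin (R := A) (M := M)
  refine (isPrecomplete_iff ..).2 fun f hf => ?_
  have hcoeff (n : ℕ) : ∃ p : Fin d → A, (∀ l, p l ∈ I ^ n) ∧ f (n + 1) - f n = ∑ l, p l • g l := by
    have hsub : f (n + 1) - f n ∈ I ^ n • (⊤ : Submodule A M) :=
      SModEq.sub_mem.1 (hf n.le_succ).symm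
    rw [← hg, Submodule.mem_ideal_smul_span_iff_exists_sum] at hsub
    obtain ⟨p, hp, hsum⟩ := hsub
    exact ⟨p, hp, by rw [← hsum, Finsupp.sum_fintype _ _ (by simp)]⟩
  choose p hpI hp using hcoeff
  have hlim (l : Fin d) : ∃ c : A, ∀ n, ∑ i ∈ Finset.range n, p i l - c ∈ I ^ n := by
    obtain ⟨c, hc⟩ := IsPrecomplete.prec ‹IsPrecomplete I A›
      (f := fun n => ∑ i ∈ Finset.range n, p i l) fun {m n} hmn => by
      rw [SModEq.comm, SModEq.sub_mem, smul_eq_mul, Ideal.mul_top, ← Finset.sum_Ico_eq_sub _ hmn]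
      exact sum_mem fun i hi => Ideal.pow_le_pow_right (Finset.mem_Ico.1 hi).1 (hpI i l)
    exact ⟨c, fun n => by simpa [SModEq.sub_mem] using hc n⟩
  choose c hc using hlim
  have hf₀ (n : ℕ) : f n = f 0 + ∑ l, (∑ i ∈ Finset.range n, p i l) • g l := by
    simp only [Finset.sum_smul]
    rw [Finset.sum_comm, ← Finset.sum_congr rfl fun i _ => hp i, Finset.sum_range_sub]
    abel
  refine ⟨f 0 + ∑ l, c l • g l, fun n => SModEq.sub_mem.2 ?_⟩
  rw [hf₀, add_sub_add_left_eq_sub, ← Finset.sum_sub_distrib]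
  exact sum_mem fun l _ => by
    rw [← sub_smul]
    exact Submodule.smul_mem_smul (hc l n) Submodule.mem_top

theorem exists_forall_le_sup_of_antitone {R : Type*} [CommRing R] {𝔞 : ℕ → Ideal R}
    (ha : Antitone 𝔞) (I : Ideal R) [IsArtinianRing (R ⧸ I)] : ∃ N, ∀ n, 𝔞 N ≤ 𝔞 n ⊔ I := by
  let f : ℕ →o (Ideal (R ⧸ I))ᵒᵈ :=
    ⟨fun n => OrderDual.toDual ((𝔞 n).map (Ideal.Quotient.mk I)),
      fun a b hab => Ideal.map_mono (ha hab)⟩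
  obtain ⟨N, hN⟩ := IsArtinian.monotone_stabilizes f
  refine ⟨N, fun n => (le_total n N).elim (fun h => (ha h).trans le_sup_left) fun h => ?_⟩
  have hle := Ideal.le_comap_of_map_le (le_of_eq (congrArg OrderDual.ofDual (hN n h)))
  rwa [show OrderDual.ofDual (f n) = (𝔞 n).map (Ideal.Quotient.mk I) from rfl,
    Ideal.comap_map_of_surjective _ Ideal.Quotient.mk_surjective, ← RingHom.ker_eq_comap_bot,
    Ideal.mk_ker] at hle

/-- A Mittag-Leffler argument: modulo each `I ^ j` the ideals `𝔞 n` stabilize. -/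
theorem exists_cauchy_sub_mem_of_isArtinianRing_quotient {R : Type*} [CommRing R] {I : Ideal R}
    {𝔞 : ℕ → Ideal R} (hI : ∀ n, IsArtinianRing (R ⧸ I ^ n)) (ha : Antitone 𝔞)
    (hIa : ∀ n, I ^ n ≤ 𝔞 n) {r : ℕ → R} (hr : ∀ m n, m ≤ n → r n - r m ∈ 𝔞 m) :
    ∃ y : ℕ → R, (∀ n, y (n + 1) - y n ∈ I ^ n) ∧ ∀ n, y n - r n ∈ 𝔞 n := by
  choose N hN using fun j => have := hI j; exists_forall_le_sup_of_antitone ha (I ^ j)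
  have hrN (j : ℕ) {κ : R} (hκ : κ ∈ 𝔞 (N j)) (n : ℕ) : r (N j) + κ - r n ∈ 𝔞 n ⊔ I ^ j := by
    rcases le_total n (N j) with h | h
    · rw [add_sub_right_comm]
      exact Ideal.mem_sup_left (add_mem (hr _ _ h) (ha h hκ))
    · refine hN j n ?_
      rw [add_sub_right_comm, ← neg_sub (r n)]
      exact add_mem (neg_mem (hr _ _ h)) hκ
  have hstep (j : ℕ) (y : R) (hy : ∀ n, y - r n ∈ 𝔞 n ⊔ I ^ j) :
      ∃ y', (∀ n, y' - r n ∈ 𝔞 n ⊔ I ^ (j + 1)) ∧ y' - y ∈ I ^ j := by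
    obtain ⟨κ, hκ, ι, hι, hsum⟩ := Submodule.mem_sup.1 (hy (N (j + 1)))
    refine ⟨r (N (j + 1)) + κ, hrN _ hκ, ?_⟩
    rw [show r (N (j + 1)) + κ - y = -ι by linear_combination hsum]
    exact neg_mem hι
  choose! next hnext hnextI using hstep
  let y : ℕ → R := Nat.rec (r (N 0)) next
  have hy (j : ℕ) : ∀ n, y j - r n ∈ 𝔞 n ⊔ I ^ j := by
    induction j with
    | zero => simp
    | succ j ih => exact hnext j _ ih
  exact ⟨y, fun n => hnextI n _ (hy n), fun n => by simpa [hIa n] using hy n n⟩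

variable {k σ R : Type*} [Field k] [CommRing R] [Algebra (MvPolynomial σ k) R]

theorem isMaximal_of_idealOfVars_le_comap [Algebra.IsIntegral (MvPolynomial σ k) R] {p : Ideal R}
    [p.IsPrime] (hp : MvPolynomial.idealOfVars σ k ≤ p.comap (algebraMap (MvPolynomial σ k) R)) :
    p.IsMaximal := by
  refine Ideal.isMaximal_of_isIntegral_of_isMaximal_comap (R := MvPolynomial σ k) p ?_
  have hker : RingHom.ker (MvPolynomial.constantCoeff (σ := σ) (R := k)) ≤
      MvPolynomial.idealOfVars σ k := fun q hq => by
    rw [← pow_one (MvPolynomial.idealOfVars σ k), MvPolynomial.mem_pow_idealOfVars_iff']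
    intro μ hμ
    rwa [(Finsupp.degree_eq_zero_iff μ).1 (by omega)]
  have hmax : (RingHom.ker (MvPolynomial.constantCoeff (σ := σ) (R := k))).IsMaximal :=
    RingHom.ker_isMaximal_of_surjective _ fun c => ⟨.C c, by simp⟩
  rwa [← hmax.eq_of_le (Ideal.IsPrime.ne_top inferInstance) (hker.trans hp)]

theorem map_algebraMap_powerSeriesBaseChange_ne_top {I : Ideal R} (hI : I ≠ ⊤)
    (hX : MvPolynomial.idealOfVars σ k ≤ I.comap (algebraMap (MvPolynomial σ k) R)) :
    I.map (algebraMap R (PowerSeriesBaseChange k σ R)) ≠ ⊤ := by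
  let ε₀ : MvPowerSeries σ k →+* R ⧸ I :=
    ((algebraMap (MvPolynomial σ k) (R ⧸ I)).comp MvPolynomial.C).comp MvPowerSeries.constantCoeff
  have hε₀ : ε₀.comp (algebraMap (MvPolynomial σ k) _) = algebraMap (MvPolynomial σ k) (R ⧸ I) := by
    refine MvPolynomial.ringHom_ext (fun c => by simp [ε₀, MvPowerSeries.algebraMap_apply'])
      fun i => ?_
    have hXi : algebraMap _ R (MvPolynomial.X i) ∈ I := hX (Ideal.subset_span ⟨i, rfl⟩)
    rw [IsScalarTower.algebraMap_apply _ R, Ideal.Quotient.algebraMap_eq,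
      Ideal.Quotient.eq_zero_iff_mem.2 hXi]
    simp [ε₀, MvPowerSeries.algebraMap_apply']
  let ε : MvPowerSeries σ k →ₐ[MvPolynomial σ k] R ⧸ I :=
    { ε₀ with commutes' := RingHom.congr_fun hε₀ }
  let f : PowerSeriesBaseChange k σ R →ₐ[MvPolynomial σ k] R ⧸ I :=
    Algebra.TensorProduct.productMap (IsScalarTower.toAlgHom _ R (R ⧸ I)) ε
  have hker : I.map (algebraMap R (PowerSeriesBaseChange k σ R)) ≤ RingHom.ker f :=
    Ideal.map_le_iff_le_comap.2 fun r hr => by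
      simpa [f, Algebra.TensorProduct.algebraMap_apply] using Ideal.Quotient.eq_zero_iff_mem.2 hr
  have := Ideal.Quotient.nontrivial_iff.2 hI
  exact ne_top_of_le_ne_top (RingHom.ker_ne_top f) hker

theorem isArtinianRing_quotient_idealOfVars_map_pow [Finite σ]
    [Module.Finite (MvPolynomial σ k) R] (n : ℕ) :
    IsArtinianRing (R ⧸ (MvPolynomial.idealOfVars σ k).map (algebraMap _ R) ^ n) := by
  have : IsNoetherianRing R := .of_finite (MvPolynomial σ k) R
  exact isArtinianRing_quotient_of_forall_isMaximal fun p hp hle =>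
    isMaximal_of_idealOfVars_le_comap (Ideal.map_le_iff_le_comap.1 (hp.le_of_pow_le hle))

variable [Finite σ] [Module.Finite (MvPolynomial σ k) R]

attribute [local instance] Algebra.TensorProduct.rightAlgebra in
theorem isPrecomplete_powerSeriesBaseChange :
    IsPrecomplete (MvPolynomial.idealOfVars σ k) (PowerSeriesBaseChange k σ R) := by
  have : IsPrecomplete ((MvPolynomial.idealOfVars σ k).map
      (algebraMap (MvPolynomial σ k) (MvPowerSeries σ k))) (MvPowerSeries σ k) := by
    have hspan : (MvPolynomial.idealOfVars σ k).map
        (algebraMap (MvPolynomial σ k) (MvPowerSeries σ k)) = .span (.range MvPowerSeries.X) := by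
      rw [MvPolynomial.idealOfVars, Ideal.map_span, ← Set.range_comp]
      exact congrArg (fun f => Ideal.span (Set.range f)) (funext MvPolynomial.coe_X)
    rw [hspan]
    infer_instance
  have : Module.Finite (MvPowerSeries σ k) (PowerSeriesBaseChange k σ R) :=
    .equiv (Algebra.TensorProduct.commRight (MvPolynomial σ k) (MvPowerSeries σ k) R).toLinearEquiv
  exact IsPrecomplete.map_algebraMap_iff.1 (isPrecomplete_of_finite
    ((MvPolynomial.idealOfVars σ k).map (algebraMap (MvPolynomial σ k) (MvPowerSeries σ k))))

theorem exists_sub_mem_map_idealOfVars_pow {y : ℕ → R}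
    (hy : ∀ n, y (n + 1) - y n ∈ (MvPolynomial.idealOfVars σ k).map (algebraMap _ R) ^ n) :
    ∃ z : PowerSeriesBaseChange k σ R, ∀ n, z - algebraMap R _ (y n) ∈
      ((MvPolynomial.idealOfVars σ k).map (algebraMap _ R) ^ n).map (algebraMap R _) := by
  let C := PowerSeriesBaseChange k σ R
  let I : Ideal R := (MvPolynomial.idealOfVars σ k).map (algebraMap _ R)
  have hC : IsPrecomplete I C :=
    IsPrecomplete.map_algebraMap_iff.2 isPrecomplete_powerSeriesBaseChange
  have hmem (n : ℕ) (c : C) :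
      c ∈ (I ^ n • ⊤ : Submodule R C) ↔ c ∈ (I ^ n).map (algebraMap R C) := by
    rw [Ideal.smul_top_eq_map, Submodule.restrictScalars_mem]
  obtain ⟨z, hz⟩ := hC.prec (f := fun n => algebraMap R C (y n)) fun {m n} hmn => by
    rw [SModEq.comm, SModEq.sub_mem, hmem, ← map_sub, ← Finset.sum_Ico_sub _ hmn]
    exact Ideal.mem_map_of_mem _ <|
      sum_mem fun i hi => Ideal.pow_le_pow_right (Finset.mem_Ico.1 hi).1 (hy i)
  exact ⟨z, fun n => (hmem n _).1 (SModEq.sub_mem.1 (hz n).symm)⟩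

end Limits

section ClosedPoint

theorem colon_span_singleton_eq_denominatorIdeal {R T : Type*} [CommRing R] [CommRing T]
    [IsDomain T] [Algebra R T] [FaithfulSMul R T] {b a : R} {s : T} (hb : b ≠ 0)
    (h : algebraMap R T b * s = algebraMap R T a) :
    (Ideal.span {b}).colon {a} = denominatorIdeal R s := by
  have hinj := FaithfulSMul.algebraMap_injective R T
  have hb' : algebraMap R T b ≠ 0 := (map_ne_zero_iff _ hinj).2 hb
  ext r
  rw [Submodule.mem_colon_singleton, smul_eq_mul, Ideal.mem_span_singleton', mem_denominatorIdeal]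
  refine exists_congr fun w => ?_
  rw [← hinj.eq_iff, map_mul, map_mul, ← h, mul_left_comm, mul_comm (algebraMap R T w),
    mul_right_inj' hb']

theorem essFiniteType_of_finite_mvPolynomial (k σ R : Type*) [Field k] [Finite σ] [CommRing R]
    [Algebra (MvPolynomial σ k) R] [Module.Finite (MvPolynomial σ k) R] [Algebra k R]
    [IsScalarTower k (MvPolynomial σ k) R] : Algebra.EssFiniteType k R :=
  Algebra.EssFiniteType.comp k (MvPolynomial σ k) R

theorem not_le_colon_span_singleton_of_derivation_mem (k σ : Type*) {R : Type*} [Field k]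
    [CharZero k] [Finite σ] [CommRing R] [IsDomain R] [IsIntegrallyClosed R]
    [Algebra (MvPolynomial σ k) R] [FaithfulSMul (MvPolynomial σ k) R]
    [Module.Finite (MvPolynomial σ k) R] [Algebra k R] [IsScalarTower k (MvPolynomial σ k) R]
    {J : Ideal R} (hJ : J ≠ ⊥) (hd : ∀ d : Derivation k R R, ∀ r ∈ J, d r ∈ J)
    {s : R} (hs : s ≠ 0) (r : R)
    [hp : ((Ideal.span {s}).colon {r}).IsPrime] : ¬ J ≤ (Ideal.span {s}).colon {r} := by
  let x : FractionRing R := algebraMap R _ r / algebraMap R _ s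
  have : IsNoetherianRing R := .of_finite (MvPolynomial σ k) R
  have : Algebra.EssFiniteType k R := essFiniteType_of_finite_mvPolynomial k σ R
  have heq : (Ideal.span {s}).colon {r} = denominatorIdeal R x :=
    colon_span_singleton_eq_denominatorIdeal hs (mul_div_cancel₀ _ (by simpa using hs))
  have hsx : s ∈ denominatorIdeal R x := heq ▸
    Submodule.mem_colon_singleton.2 (Ideal.mul_mem_right r _ (Ideal.mem_span_singleton_self s))
  have : (denominatorIdeal R x).IsPrime := heq ▸ hp
  have := isDiscreteValuationRing_localization_denominatorIdeal (R := R) (s := x)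
    ((Submodule.ne_bot_iff _).2 ⟨s, hsx, hs⟩)
  rw [heq]
  exact not_le_of_derivation_mem (k := k) (σ := σ) hJ hd _

variable {k σ R T : Type*} [Field k] [Finite σ] [CommRing R] [Algebra (MvPolynomial σ k) R]
  [Module.Finite (MvPolynomial σ k) R] [CommRing T] [Algebra R T]

theorem exists_mul_sub_mem_completionKernel {m : Ideal T} (hX : MvPolynomial.idealOfVars σ k ≤
      (m.comap (algebraMap R T)).comap (algebraMap (MvPolynomial σ k) R)) {s : T}
    (hs : ∀ n, ∃ r : R, s - algebraMap R T r ∈ m ^ n) {a b : R}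
    (h : algebraMap R T a = algebraMap R T b * s) :
    ∃ z : PowerSeriesBaseChange k σ R, algebraMap R _ b * z - algebraMap R _ a ∈
      completionKernel R (PowerSeriesBaseChange k σ R) m := by
  let C := PowerSeriesBaseChange k σ R
  let I : Ideal R := (MvPolynomial.idealOfVars σ k).map (algebraMap _ R)
  let 𝔞 (n : ℕ) : Ideal R := (m ^ n).comap (algebraMap R T)
  have h𝔞 : Antitone 𝔞 := fun _ _ h => Ideal.comap_mono (Ideal.pow_le_pow_right h)
  have hI (n : ℕ) : I ^ n ≤ 𝔞 n := (Ideal.pow_right_mono (Ideal.map_le_iff_le_comap.2 hX) n).trans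
    (Ideal.le_comap_pow _ n)
  choose r hr using hs
  obtain ⟨y, hyI, hyr⟩ := exists_cauchy_sub_mem_of_isArtinianRing_quotient
    isArtinianRing_quotient_idealOfVars_map_pow h𝔞 hI (r := r) fun i j hij => by
      simpa [𝔞] using sub_mem (hr i) (Ideal.pow_le_pow_right hij (hr j))
  obtain ⟨z, hz⟩ := exists_sub_mem_map_idealOfVars_pow hyI
  refine ⟨z, mem_completionKernel.2 fun n => ?_⟩
  have hya : b * y n - a ∈ 𝔞 n := by
    have hmem := Ideal.mul_mem_left _ (algebraMap R T b) (sub_mem (hyr n) (hr n))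
    rw [Ideal.mem_comap, map_sub, map_mul, h]
    convert hmem using 1
    rw [map_sub]
    ring
  have hmem := add_mem (Ideal.mul_mem_left _ (algebraMap R C b) (Ideal.map_mono (hI n) (hz n)))
    (Ideal.mem_map_of_mem (algebraMap R C) hya)
  convert hmem using 1
  rw [map_sub, map_mul]
  ring

variable [CharZero k] [IsDomain R] [IsIntegrallyClosed R] [FaithfulSMul (MvPolynomial σ k) R]
  [Algebra k R] [IsScalarTower k (MvPolynomial σ k) R] [IsDomain T] [Algebra k T]
  [Algebra.EssFiniteType k T] [FaithfulSMul R T] [IsScalarTower k R T]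

/-- If `K` is the completion kernel, the contraction of `K + Ann K` to `R` is stable under all
derivations, hence contained in no associated prime of a nonzero principal ideal. -/
theorem exists_sub_one_mem_completionKernel_mul_eq_zero (m : Ideal T) :
    ∃ e, e - 1 ∈ completionKernel R (PowerSeriesBaseChange k σ R) m ∧
      ∀ z ∈ completionKernel R (PowerSeriesBaseChange k σ R) m, e * z = 0 := by
  let C := PowerSeriesBaseChange k σ R
  let K := completionKernel R C m
  have : IsNoetherianRing R := .of_finite (MvPolynomial σ k) R
  have : IsNoetherianRing T := Algebra.EssFiniteType.isNoetherianRing k T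
  have : Algebra.EssFiniteType k R := essFiniteType_of_finite_mvPolynomial k σ R
  let J : Ideal R := (K ⊔ K.annihilator).comap (algebraMap R C)
  have hprolong (d : Derivation k R R) (d' : Derivation ℤ C C)
      (hd : ∀ r, d' (algebraMap R C r) = algebraMap R C (d r)) :
      ∀ x ∈ K ⊔ K.annihilator, d' x ∈ K ⊔ K.annihilator := fun x hx =>
    derivation_mem_sup_annihilator (fun z hz => derivation_mem_completionKernel d d' hd hz) hx
  have hJ₀ : J ≠ ⊥ := by
    obtain ⟨z, hz, hz₀⟩ := exists_mem_sup_annihilator_mem_nonZeroDivisors K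
    exact comap_algebraMap_powerSeriesBaseChange_ne_bot hz hz₀ hprolong
  have hJd (d : Derivation k R R) (r : R) (hr : r ∈ J) : d r ∈ J := by
    have := Fintype.ofFinite σ
    obtain ⟨d', hd', -⟩ := exists_derivation_powerSeriesBaseChange (σ := σ) d
    have hmem := hprolong d d' hd' _ hr
    rwa [show d' (algebraMap R C r) = algebraMap R C (d r) from hd' r] at hmem
  obtain ⟨s, hs, hs₀⟩ := Submodule.exists_mem_ne_zero_of_ne_bot hJ₀
  obtain ⟨t, ht, hst⟩ := exists_mem_colon_singleton_eq_of_not_le fun r _ =>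
    not_le_colon_span_singleton_of_derivation_mem k σ hJ₀ hJd hs₀ r
  exact exists_sub_one_mem_mul_eq_zero
    (fun s hs x hx => mem_completionKernel_of_mul_mem hs hx) hs₀ hs ht hst

theorem not_denominatorIdeal_le_of_idealOfVars_le {m : Ideal T} (hm : m ≠ ⊤)
    (hX : MvPolynomial.idealOfVars σ k ≤
      (m.comap (algebraMap R T)).comap (algebraMap (MvPolynomial σ k) R)) {s : T}
    (hden : denominatorIdeal R s ≠ ⊥) (hs : ∀ n, ∃ r : R, s - algebraMap R T r ∈ m ^ n) :
    ¬ denominatorIdeal R s ≤ m.comap (algebraMap R T) := by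
  intro hle
  let C := PowerSeriesBaseChange k σ R
  obtain ⟨b, hb, hb₀⟩ := Submodule.exists_mem_ne_zero_of_ne_bot hden
  obtain ⟨a, ha⟩ := mem_denominatorIdeal.1 hb
  obtain ⟨z, hz⟩ := exists_mul_sub_mem_completionKernel hX hs ha
  obtain ⟨e, he₁, he₀⟩ := exists_sub_one_mem_completionKernel_mul_eq_zero (k := k) (σ := σ)
    (R := R) m
  have hmul : algebraMap R C a * e ∈ (Ideal.span {b}).map (algebraMap R C) := by
    rw [Ideal.map_span, Set.image_singleton, Ideal.mem_span_singleton]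
    exact ⟨e * z, by linear_combination -he₀ _ hz⟩
  have he := mem_map_colon_of_flat hmul
  rw [colon_span_singleton_eq_denominatorIdeal hb₀ ha.symm] at he
  have hone : (m.comap (algebraMap R T)).map (algebraMap R C) = ⊤ := by
    have hmem := mem_completionKernel.1 he₁ 1
    rw [pow_one] at hmem
    exact (Ideal.eq_top_iff_one _).2 (by simpa using sub_mem (Ideal.map_mono hle he) hmem)
  exact map_algebraMap_powerSeriesBaseChange_ne_top (Ideal.comap_ne_top _ hm) hX hone

end ClosedPoint

section Normalization

open Polynomial

variable {k R : Type*} [Field k] [CommRing R] [Algebra k R]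

theorem exists_monic_aeval_mem [Algebra.FiniteType k R] (Q : Ideal R) [Q.IsMaximal] (x : R) :
    ∃ p : k[X], p.Monic ∧ p.natDegree ≠ 0 ∧ aeval x p ∈ Q := by
  let : Field (R ⧸ Q) := Ideal.Quotient.field Q
  have : Module.Finite k (R ⧸ Q) := finite_of_finite_type_of_isJacobsonRing k (R ⧸ Q)
  have hint : IsIntegral k (Ideal.Quotient.mk Q x) := Algebra.IsIntegral.isIntegral _
  refine ⟨minpoly k (Ideal.Quotient.mk Q x), minpoly.monic hint,
    (minpoly.natDegree_pos hint).ne', ?_⟩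
  rw [← Ideal.Quotient.eq_zero_iff_mem]
  exact (aeval_algHom_apply (Ideal.Quotient.mkₐ k Q) x _).symm.trans (minpoly.aeval k _)

/-- Noether normalization with all variables in a prescribed maximal ideal: replace each variable by
the value at it of a polynomial that vanishes at its residue. -/
theorem exists_finite_injective_X_mem (k : Type*) [Field k] [Algebra k R] [Nontrivial R]
    [Algebra.FiniteType k R] (Q : Ideal R) [Q.IsMaximal] :
    ∃ (d : ℕ) (g : MvPolynomial (Fin d) k →ₐ[k] R), Function.Injective g ∧ g.Finite ∧
      ∀ i, g (MvPolynomial.X i) ∈ Q := by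
  obtain ⟨d, g₀, hg₀, hint₀⟩ := exists_integral_inj_algHom_of_fg k R
  choose p hmonic hdeg hmem using fun i => exists_monic_aeval_mem (k := k) Q
    (g₀ (MvPolynomial.X i))
  have hind : AlgebraicIndependent k fun i => g₀ (MvPolynomial.X i) := by
    rwa [AlgebraicIndependent, ← MvPolynomial.comp_aeval, MvPolynomial.aeval_X_left]
  let g : MvPolynomial (Fin d) k →ₐ[k] R :=
    MvPolynomial.aeval fun i => aeval (g₀ (MvPolynomial.X i)) (p i)
  have hgX (i) : g (MvPolynomial.X i) = aeval (g₀ (MvPolynomial.X i)) (p i) :=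
    MvPolynomial.aeval_X _ i
  refine ⟨d, g, hind.polynomial_aeval_of_transcendental fun i => transcendental _ (hdeg i) ?_, ?_,
    fun i => (hgX i).symm ▸ hmem i⟩
  · rw [hmonic i]
    exact one_mem _
  let := g.toRingHom.toAlgebra
  have : IsScalarTower k (MvPolynomial (Fin d) k) R := .of_algebraMap_eq' g.comp_algebraMap.symm
  have : Algebra.FiniteType (MvPolynomial (Fin d) k) R := .of_restrictScalars_finiteType k _ R
  have hX (i) : IsIntegral (MvPolynomial (Fin d) k) (g₀ (MvPolynomial.X i)) :=
    .of_aeval_monic ((hmonic i).map (algebraMap k _))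
      ((hmonic i).natDegree_map (algebraMap k (MvPolynomial (Fin d) k)) ▸ hdeg i)
      (by rw [aeval_map_algebraMap, ← hgX i]; exact isIntegral_algebraMap)
  have hrange : g₀.range ≤ (integralClosure (MvPolynomial (Fin d) k) R).restrictScalars k := by
    rw [← Algebra.map_top, ← MvPolynomial.adjoin_range_X, AlgHom.map_adjoin, Algebra.adjoin_le_iff]
    rintro _ ⟨_, ⟨i, rfl⟩, rfl⟩
    exact hX i
  have : Algebra.IsIntegral (MvPolynomial (Fin d) k) R := ⟨fun r =>
    isIntegral_trans (A := integralClosure (MvPolynomial (Fin d) k) R) r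
      (RingHom.IsIntegralElem.of_comp
        (f := (g₀.codRestrict _ fun q => hrange ⟨q, rfl⟩).toRingHom) (hint₀ r))⟩
  exact Algebra.IsIntegral.finite

end Normalization

section MaximalPoint

variable {R T : Type*} [CommRing R] [CommRing T] [Algebra R T]

theorem not_denominatorIdeal_le_of_isMaximal (k : Type*) [Field k] [CharZero k] [IsDomain R]
    [IsIntegrallyClosed R] [Algebra k R] [Algebra.FiniteType k R] [IsDomain T] [Algebra k T]
    [Algebra.EssFiniteType k T] [FaithfulSMul R T] [IsScalarTower k R T] {m : Ideal T}
    [hmax : (m.comap (algebraMap R T)).IsMaximal] {s : T} (hden : denominatorIdeal R s ≠ ⊥)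
    (hs : ∀ n, ∃ r : R, s - algebraMap R T r ∈ m ^ n) :
    ¬ denominatorIdeal R s ≤ m.comap (algebraMap R T) := by
  obtain ⟨d, g, hg, hfin, hgX⟩ := exists_finite_injective_X_mem k (m.comap (algebraMap R T))
  let := g.toRingHom.toAlgebra
  have : IsScalarTower k (MvPolynomial (Fin d) k) R := .of_algebraMap_eq' g.comp_algebraMap.symm
  have : Module.Finite (MvPolynomial (Fin d) k) R := hfin
  have : FaithfulSMul (MvPolynomial (Fin d) k) R := (faithfulSMul_iff_algebraMap_injective _ _).2 hg
  have hm : m ≠ ⊤ := fun h => hmax.ne_top (by rw [h, Ideal.comap_top])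
  refine not_denominatorIdeal_le_of_idealOfVars_le (k := k) (σ := Fin d) hm ?_ hden hs
  rw [MvPolynomial.idealOfVars, Ideal.span_le]
  rintro _ ⟨i, rfl⟩
  exact hgX i

theorem exists_sub_mem_pow_of_mul_sub_mem_pow {m : Ideal T}
    [hmax : (m.comap (algebraMap R T)).IsMaximal] {t a : R} {s : T} {n : ℕ}
    (ht : t ∉ m.comap (algebraMap R T)) (h : algebraMap R T t * s - algebraMap R T a ∈ m ^ n) :
    ∃ r : R, s - algebraMap R T r ∈ m ^ n := by
  obtain ⟨y, i, hi, hyi⟩ := hmax.exists_inv ht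
  have hcop : IsCoprime t i := ⟨y, 1, by rwa [one_mul]⟩
  obtain ⟨v, w, hvw⟩ := hcop.pow_right (n := n)
  refine ⟨v * a, ?_⟩
  have heq : s - algebraMap R T (v * a) = algebraMap R T v * (algebraMap R T t * s -
      algebraMap R T a) + algebraMap R T w * s * algebraMap R T i ^ n := by
    have := congrArg (algebraMap R T) hvw
    simp only [map_add, map_mul, map_pow, map_one] at this ⊢
    linear_combination (-s) * this
  rw [heq]
  exact add_mem (Ideal.mul_mem_left _ _ h)
    (Ideal.mul_mem_left _ _ (Ideal.pow_mem_pow (Ideal.mem_comap.1 hi) n))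

end MaximalPoint

section Localization

variable {R R' T : Type*} [CommRing R] [CommRing R'] [CommRing T] [Algebra R R'] [Algebra R' T]
  [Algebra R T] [IsScalarTower R R' T] (U : Submonoid R) [IsLocalization U R']

include U in
theorem denominatorIdeal_localization_le {P : Ideal R'} {s : T}
    (h : denominatorIdeal R s ≤ P.comap (algebraMap R R')) : denominatorIdeal R' s ≤ P := by
  intro r' hr'
  obtain ⟨w', hw'⟩ := mem_denominatorIdeal.1 hr'
  obtain ⟨u, hu⟩ := IsLocalization.exist_integer_multiples_of_finite U ![r', w']
  obtain ⟨r, hr⟩ := hu 0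
  obtain ⟨w, hw⟩ := hu 1
  simp only [Algebra.smul_def, Matrix.cons_val_zero, Matrix.cons_val_one] at hr hw
  have hmem : r ∈ denominatorIdeal R s := mem_denominatorIdeal.2 ⟨w, by
    rw [IsScalarTower.algebraMap_apply R R' T, IsScalarTower.algebraMap_apply R R' T, hw, hr,
      map_mul, map_mul, hw', mul_assoc]⟩
  have := h hmem
  rwa [Ideal.mem_comap, hr, Ideal.unit_mul_mem_iff_mem _ (IsLocalization.map_units R' u)] at this

include U in
theorem isMaximal_comap_of_forall_exists_mul_sub_mem {m : Ideal T} (hm : m ≠ ⊤)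
    (h : ∀ r ∉ m.comap (algebraMap R T), ∃ v, ∃ u ∈ U, r * v - u ∈ m.comap (algebraMap R T)) :
    (m.comap (algebraMap R' T)).IsMaximal := by
  rw [IsScalarTower.algebraMap_eq R R' T, ← Ideal.comap_comap] at h
  refine Ideal.isMaximal_iff.2 ⟨(Ideal.ne_top_iff_one _).1 (Ideal.comap_ne_top _ hm),
    fun J x hJ hx hxJ => (Ideal.eq_top_iff_one J).1 ?_⟩
  obtain ⟨r, u, rfl⟩ := IsLocalization.exists_mk'_eq U x
  rw [IsLocalization.mk'_mem_iff] at hx hxJ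
  obtain ⟨v, u', hu', hv⟩ := h r hx
  have hmem := hJ hv
  rw [map_sub, map_mul, J.sub_mem_iff_right (J.mul_mem_right _ hxJ)] at hmem
  exact J.eq_top_of_isUnit_mem hmem (IsLocalization.map_units R' ⟨u', hu'⟩)

theorem finiteType_localization_algebraMapSubmonoid (B R : Type*) [CommRing B] [CommRing R]
    [Algebra B R] [Algebra.FiniteType B R] (M : Submonoid B) :
    Algebra.FiniteType (Localization M) (Localization (Algebra.algebraMapSubmonoid R M)) :=
  have : Algebra.IsPushout B (Localization M) R (Localization (Algebra.algebraMapSubmonoid R M)) :=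
    (Algebra.isPushout_of_isLocalization M _ _ _).symm
  .equiv inferInstance (Algebra.IsPushout.equiv B (Localization M) R _)

end Localization

section ResidueParameters

universe u

/-- `φ` sends the variables to lifts of a transcendence basis of the residue field of `Q`. -/
theorem exists_residue_parameters (k : Type*) {R : Type u} [Field k] [CommRing R] [Algebra k R]
    (Q : Ideal R) [Q.IsPrime] :
    ∃ (ι : Type u) (φ : MvPolynomial ι k →ₐ[k] R), (∀ p ≠ 0, φ p ∉ Q) ∧
      ∀ r ∉ Q, ∃ v, ∃ p ≠ 0, r * v - φ p ∈ Q := by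
  obtain ⟨ι, x, hx⟩ := exists_isTranscendenceBasis' k (R ⧸ Q)
  choose y hy using fun i => Ideal.Quotient.mk_surjective (x i)
  have hφ (p : MvPolynomial ι k) :
      Ideal.Quotient.mk Q (MvPolynomial.aeval y p) = MvPolynomial.aeval x p := by
    have h : (Ideal.Quotient.mkₐ k Q).comp (MvPolynomial.aeval y) = MvPolynomial.aeval x := by
      ext i
      simp [hy]
    exact DFunLike.congr_fun h p
  refine ⟨ι, MvPolynomial.aeval y, fun p hp₀ hp => hp₀ ?_, fun r hr => ?_⟩
  · rw [← Ideal.Quotient.eq_zero_iff_mem, hφ] at hp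
    exact hx.1.eq_zero_of_aeval_eq_zero p hp
  have := hx.isAlgebraic
  have hr₀ : Ideal.Quotient.mk Q r ≠ 0 := mt Ideal.Quotient.eq_zero_iff_mem.1 hr
  obtain ⟨q, hq₀, v, hv⟩ := (Algebra.IsAlgebraic.isAlgebraic
    (R := Algebra.adjoin k (Set.range x)) (Ideal.Quotient.mk Q r)).exists_nonzero_dvd
      (mem_nonZeroDivisors_of_ne_zero hr₀)
  obtain ⟨v, rfl⟩ := Ideal.Quotient.mk_surjective v
  obtain ⟨p, hp⟩ := (Algebra.adjoin_range_eq_range_aeval k x).le q.2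
  refine ⟨v, p, ?_, ?_⟩
  · rintro rfl
    exact hq₀ (Subtype.ext (hp.symm.trans (map_zero _)))
  · rw [← Ideal.Quotient.eq, map_mul, ← hv, hφ]
    exact hp.symm

end ResidueParameters

section LocalPoint

open IsLocalRing

variable {R T : Type*} [CommRing R] [CommRing T] [Algebra R T] [IsLocalRing T]

theorem not_denominatorIdeal_le_of_isMaximal_localization (K R' : Type*) [Field K] [CharZero K]
    [CommRing R'] [Algebra R R'] [Algebra R' T] [IsScalarTower R R' T] [FaithfulSMul R T]
    (U : Submonoid R) [IsLocalization U R'] [IsIntegrallyClosed R'] [Algebra K R']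
    [Algebra.FiniteType K R'] [IsDomain T] [Algebra K T] [Algebra.EssFiniteType K T]
    [IsScalarTower K R' T] [((maximalIdeal T).comap (algebraMap R' T)).IsMaximal] {s : T}
    (hden : denominatorIdeal R s ≠ ⊥)
    (hs : ∀ n, ∃ a t : R, t ∉ (maximalIdeal T).comap (algebraMap R T) ∧
      algebraMap R T t * s - algebraMap R T a ∈ maximalIdeal T ^ n) :
    ¬ denominatorIdeal R s ≤ (maximalIdeal T).comap (algebraMap R T) := by
  intro hle
  rw [IsScalarTower.algebraMap_eq R R' T, ← Ideal.comap_comap] at hle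
  have hinj : Function.Injective (algebraMap R' T) := by
    refine IsLocalization.injective_of_map_algebraMap_zero (M := U) R' _ fun r hr => ?_
    rw [← IsScalarTower.algebraMap_apply, FaithfulSMul.algebraMap_eq_zero_iff] at hr
    rw [hr, map_zero]
  have : FaithfulSMul R' T := (faithfulSMul_iff_algebraMap_injective R' T).2 hinj
  have : IsDomain R' := hinj.isDomain
  refine not_denominatorIdeal_le_of_isMaximal K (m := maximalIdeal T) (s := s) ?_ (fun n => ?_)
    (denominatorIdeal_localization_le U hle)
  · obtain ⟨b, hb, hb₀⟩ := Submodule.exists_mem_ne_zero_of_ne_bot hden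
    obtain ⟨a, ha⟩ := mem_denominatorIdeal.1 hb
    refine Submodule.ne_bot_iff _ |>.2 ⟨algebraMap R R' b,
      mem_denominatorIdeal.2 ⟨algebraMap R R' a, ?_⟩, fun h => hb₀ ?_⟩
    · rwa [← IsScalarTower.algebraMap_apply, ← IsScalarTower.algebraMap_apply]
    · rw [← FaithfulSMul.algebraMap_eq_zero_iff R T, IsScalarTower.algebraMap_apply R R' T, h,
        map_zero]
  · obtain ⟨a, t, ht, h⟩ := hs n
    rw [IsScalarTower.algebraMap_apply R R' T, IsScalarTower.algebraMap_apply R R' T] at h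
    rw [IsScalarTower.algebraMap_eq R R' T, ← Ideal.comap_comap] at ht
    exact exists_sub_mem_pow_of_mul_sub_mem_pow ht h

/-- Adjoining to the base field a transcendence basis of the residue field of the prime below the
maximal ideal of `T` makes that prime maximal. -/
theorem not_denominatorIdeal_le_of_forall_exists_sub_mem_pow (k : Type*) [Field k] [CharZero k]
    [IsDomain R] [IsIntegrallyClosed R] [Algebra k R] [Algebra.FiniteType k R] [IsDomain T]
    [Algebra k T] [Algebra.EssFiniteType k T] [FaithfulSMul R T] [IsScalarTower k R T] {s : T}
    (hden : denominatorIdeal R s ≠ ⊥)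
    (hs : ∀ n, ∃ a t : R, t ∉ (maximalIdeal T).comap (algebraMap R T) ∧
      algebraMap R T t * s - algebraMap R T a ∈ maximalIdeal T ^ n) :
    ¬ denominatorIdeal R s ≤ (maximalIdeal T).comap (algebraMap R T) := by
  obtain ⟨ι, φ, hφ, hres⟩ := exists_residue_parameters k ((maximalIdeal T).comap (algebraMap R T))
  let B := MvPolynomial ι k
  let : Algebra B R := φ.toRingHom.toAlgebra
  have : IsScalarTower k B R := .of_algebraMap_eq' φ.comp_algebraMap.symm
  have : Algebra.FiniteType B R := .of_restrictScalars_finiteType k B R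
  let U := Algebra.algebraMapSubmonoid R (nonZeroDivisors B)
  have hUT (u : U) : IsUnit (algebraMap R T u) := by
    obtain ⟨_, p, hp, rfl⟩ := u
    exact notMem_maximalIdeal.1 (hφ p (nonZeroDivisors.ne_zero hp))
  have hU : U ≤ nonZeroDivisors R := fun u hu => mem_nonZeroDivisors_of_ne_zero fun h =>
    (hUT ⟨u, hu⟩).ne_zero (by simp [h])
  let K := FractionRing B
  let R' := Localization U
  let : Algebra K R' := localizationAlgebra (nonZeroDivisors B) R
  have : IsScalarTower B K R' := isScalarTower_localizationAlgebra (nonZeroDivisors B) R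
  have : Algebra.FiniteType K R' :=
    finiteType_localization_algebraMapSubmonoid B R (nonZeroDivisors B)
  have : IsIntegrallyClosed R' := isIntegrallyClosed_of_isLocalization R' U hU
  let : Algebra R' T := (IsLocalization.lift (M := U) hUT).toAlgebra
  have : IsScalarTower R R' T := .of_algebraMap_eq fun r => (IsLocalization.lift_eq hUT r).symm
  let : Algebra K T := ((algebraMap R' T).comp (algebraMap K R')).toAlgebra
  have : IsScalarTower K R' T := .of_algebraMap_eq' rfl
  have : IsScalarTower k K R' := .to₁₃₄ k B K R'
  have : IsScalarTower k R' T := .to₁₃₄ k R R' T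
  have : IsScalarTower k K T := .to₁₂₄ k K R' T
  have : Algebra.EssFiniteType K T := .of_comp k K T
  have : CharZero K := charZero_of_injective_algebraMap (algebraMap k K).injective
  have : ((maximalIdeal T).comap (algebraMap R' T)).IsMaximal := by
    refine isMaximal_comap_of_forall_exists_mul_sub_mem U (Ideal.IsPrime.ne_top inferInstance)
      fun r hr => ?_
    obtain ⟨v, p, hp, h⟩ := hres r hr
    exact ⟨v, φ p, ⟨p, mem_nonZeroDivisors_of_ne_zero hp, rfl⟩, h⟩
  exact not_denominatorIdeal_le_of_isMaximal_localization K R' U hden hs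

end LocalPoint

section FixedPrime

open IsLocalRing

theorem isLocalHom_localAlgHom {k R S : Type*} [CommRing k] [CommRing R] [CommRing S] [Algebra k R]
    [Algebra k S] (Q : Ideal R) [Q.IsPrime] (P : Ideal S) [P.IsPrime] (f : R →ₐ[k] S)
    (hf : Q = P.comap f) : IsLocalHom (Localization.localAlgHom Q P f hf) :=
  ⟨fun a => (Localization.isLocalHom_localRingHom Q P f.toRingHom hf).map_nonunit a⟩

theorem semiconj_localRingHom {R S : Type*} [CommRing R] [CommRing S] {Q : Ideal R} [Q.IsPrime]
    {P : Ideal S} [P.IsPrime] {f : R →+* S} {γ : R →+* R} {g : S →+* S}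
    (h : Function.Semiconj f γ g) (hf : Q = P.comap f) (hγ : Q = Q.comap γ) (hg : P = P.comap g) :
    Function.Semiconj (Localization.localRingHom Q P f hf) (Localization.localRingHom Q Q γ hγ)
      (Localization.localRingHom P P g hg) := by
  have hcomp : f.comp γ = g.comp f := RingHom.ext h
  refine RingHom.congr_fun (f := (Localization.localRingHom Q P f hf).comp
    (Localization.localRingHom Q Q γ hγ)) (g := (Localization.localRingHom P P g hg).comp
      (Localization.localRingHom Q P f hf)) ?_
  rw [← Localization.localRingHom_comp, ← Localization.localRingHom_comp]
  simp only [hcomp]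

variable {k R S : Type*} [Field k] [CommRing R] [CommRing S] [Algebra k R] [Algebra k S]
  [Algebra R S] [IsScalarTower k R S]

theorem exists_mul_sub_mem_pow_of_semiconj [IsNoetherianRing R] [Algebra.EssFiniteType k S]
    (γ : R →ₐ[k] R) (g : S ≃ₐ[k] S) (h : Function.Semiconj (algebraMap R S) γ g) (P : Ideal S)
    [P.IsPrime] (hP : P.comap g = P) {s : S} (hs : g s ∈ (algebraMap R S).range) (n : ℕ) :
    ∃ a t : R, t ∉ P.comap (algebraMap R S) ∧
      algebraMap S (Localization.AtPrime P) (algebraMap R S t * s - algebraMap R S a) ∈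
        maximalIdeal (Localization.AtPrime P) ^ n := by
  let f := IsScalarTower.toAlgHom k R S
  let Q := P.comap f
  have hQ : Q = Q.comap γ := by
    ext r
    change f r ∈ P ↔ f (γ r) ∈ P
    rw [show f (γ r) = g (f r) from h r, ← Ideal.mem_comap (f := g), hP]
  let A := Localization.AtPrime Q
  let T := Localization.AtPrime P
  let ρ : A →ₐ[k] T := Localization.localAlgHom Q P f rfl
  let γ' : A →ₐ[k] A := Localization.localAlgHom Q Q γ hQ
  let g' : T ≃ₐ[k] T := Localization.localAlgEquiv P P g hP.symm
  have hρ (r : R) : ρ (algebraMap R A r) = algebraMap S T (algebraMap R S r) :=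
    Localization.localRingHom_to_map Q P f.toRingHom rfl r
  have hg' (x : S) : g' (algebraMap S T x) = algebraMap S T (g x) :=
    Localization.localRingHom_to_map P P _ hP.symm x
  have : IsLocalHom ρ := isLocalHom_localAlgHom Q P f rfl
  have : IsLocalHom γ' := isLocalHom_localAlgHom Q Q γ hQ
  have h' : Function.Semiconj ρ γ' g' := semiconj_localRingHom (f := f.toRingHom)
    (γ := γ.toRingHom) (g := g.toAlgHom.toRingHom) h rfl hQ hP.symm
  have : Algebra.EssFiniteType k T := .comp k S T
  obtain ⟨r, hr⟩ := hs
  obtain ⟨a', ha'⟩ := exists_sub_map_mem_pow_of_semiconj (ρ : A →+* T) (γ' : A →+* A)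
    (g' : T ≃+* T) h' (residueField_map_surjective_of_semiconj ρ γ' g' h')
    (x := algebraMap S T s) (a := algebraMap R A r)
    ((hg' s).trans (hr ▸ (hρ r).symm)) n
  obtain ⟨a, t, rfl⟩ := IsLocalization.exists_mk'_eq Q.primeCompl a'
  refine ⟨a, t, t.2, ?_⟩
  have hat := congrArg ρ (IsLocalization.mk'_spec' A a t)
  rw [map_mul, hρ, hρ] at hat
  rw [map_sub, map_mul, ← hat, ← mul_sub]
  exact Ideal.mul_mem_left _ _ ha'

theorem denominatorIdeal_algebraMap {T : Type*} [CommRing T] [Algebra R T] [Algebra S T]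
    [IsScalarTower R S T] [FaithfulSMul S T] (s : S) :
    denominatorIdeal R (algebraMap S T s) = denominatorIdeal R s := by
  ext r
  simp only [mem_denominatorIdeal, IsScalarTower.algebraMap_apply R S T, ← map_mul,
    (FaithfulSMul.algebraMap_injective S T).eq_iff]

theorem not_denominatorIdeal_le_comap_of_semiconj [CharZero k] [IsDomain R] [IsIntegrallyClosed R]
    [Algebra.FiniteType k R] [IsDomain S] [Algebra.EssFiniteType k S] [FaithfulSMul R S]
    (γ : R →ₐ[k] R) (g : S ≃ₐ[k] S) (h : Function.Semiconj (algebraMap R S) γ g) (P : Ideal S)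
    [P.IsPrime] (hP : P.comap g = P) {s : S} (hs : g s ∈ (algebraMap R S).range) :
    ¬ denominatorIdeal R s ≤ P.comap (algebraMap R S) := by
  let T := Localization.AtPrime P
  have : IsNoetherianRing R := Algebra.FiniteType.isNoetherianRing k R
  have : IsDomain T := IsLocalization.isDomain_localization P.primeCompl_le_nonZeroDivisors
  have : Algebra.EssFiniteType k T := .comp k S T
  have : FaithfulSMul R T := (faithfulSMul_iff_algebraMap_injective R T).2 <|
    (FaithfulSMul.algebraMap_injective S T).comp (FaithfulSMul.algebraMap_injective R S)
  have hcomap : (maximalIdeal T).comap (algebraMap R T) = P.comap (algebraMap R S) := by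
    ext r
    exact IsLocalization.AtPrime.to_map_mem_maximal_iff T P (algebraMap R S r)
  rw [← hcomap, ← denominatorIdeal_algebraMap (T := T)]
  refine not_denominatorIdeal_le_of_forall_exists_sub_mem_pow k ?_ fun n => ?_
  · rw [denominatorIdeal_algebraMap]
    exact denominatorIdeal_ne_bot_of_semiconj γ g h hs
  · obtain ⟨a, t, ht, hat⟩ := exists_mul_sub_mem_pow_of_semiconj γ g h P hP hs n
    refine ⟨a, t, hcomap ▸ ht, ?_⟩
    rwa [map_sub, map_mul] at hat

end FixedPrime

section PolarPrimes

variable {R S : Type*} [CommRing R] [IsDomain R] [IsNoetherianRing R] [IsIntegrallyClosed R]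
  [CommRing S] [IsDomain S] [Algebra R S] [FaithfulSMul R S]

theorem isDiscreteValuationRing_of_mem_minimalPrimes_denominatorIdeal {s : S}
    (hden : denominatorIdeal R s ≠ ⊥) {p : Ideal R} [p.IsPrime]
    (hp : p ∈ (denominatorIdeal R s).minimalPrimes) :
    IsDiscreteValuationRing (Localization.AtPrime p) := by
  obtain ⟨x, rfl⟩ := Submodule.exists_eq_colon_of_mem_minimalPrimes hp
  exact isDiscreteValuationRing_localization_denominatorIdeal (s := x) (hp := ‹_›)
    (ne_bot_of_le_ne_bot hden hp.1.2)

theorem height_eq_one_of_mem_minimalPrimes_denominatorIdeal {s : S}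
    (hden : denominatorIdeal R s ≠ ⊥) {p : Ideal R}
    (hp : p ∈ (denominatorIdeal R s).minimalPrimes) : p.height = 1 := by
  have := hp.1.1
  have := isDiscreteValuationRing_of_mem_minimalPrimes_denominatorIdeal hden hp
  exact height_eq_one_of_isDiscreteValuationRing p

/-- At such a prime `s⁻¹` is a non-unit of the localization, but it becomes a unit in `S`. -/
theorem comap_ne_of_mem_minimalPrimes_denominatorIdeal {s : S} (hden : denominatorIdeal R s ≠ ⊥)
    {p : Ideal R} (hp : p ∈ (denominatorIdeal R s).minimalPrimes) (P : Ideal S) :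
    P.comap (algebraMap R S) ≠ p := by
  rintro rfl
  have := hp.1.1
  have := isDiscreteValuationRing_of_mem_minimalPrimes_denominatorIdeal hden hp
  obtain ⟨c, hc, w, hw, hcw⟩ := exists_mul_eq_of_denominatorIdeal_le hden hp.1.2
  rw [Ideal.mem_comap, ← hcw] at hw
  exact hw (P.mul_mem_right s hc)

theorem finite_setOf_mem_minimalPrimes_denominatorIdeal [Algebra.FiniteType R S] :
    {p : Ideal R | ∃ s : S, denominatorIdeal R s ≠ ⊥ ∧
      p ∈ (denominatorIdeal R s).minimalPrimes}.Finite := by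
  obtain ⟨f, hf0, hf⟩ := exists_forall_mem_range_comap (R := R) (S := S)
  refine (Ideal.finite_minimalPrimes_of_isNoetherianRing R (Ideal.span {f})).subset ?_
  rintro p ⟨s, hden, hp⟩
  have := hp.1.1
  refine mem_minimalPrimes_span_singleton_of_height_eq_one
    (height_eq_one_of_mem_minimalPrimes_denominatorIdeal hden hp) hf0 ?_
  by_contra hfp
  obtain ⟨P, -, hP⟩ := hf p this hfp
  exact comap_ne_of_mem_minimalPrimes_denominatorIdeal hden hp P hP

end PolarPrimes

section PeriodicPrimes

variable {S : Type*} [CommRing S]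

theorem mem_iterate_comap {g : S →+* S} {I : Ideal S} {n : ℕ} {x : S} :
    x ∈ (Ideal.comap g)^[n] I ↔ g^[n] x ∈ I := by
  induction n generalizing I with
  | zero => rfl
  | succ n ih => rw [Function.iterate_succ_apply, ih, Ideal.mem_comap, Function.iterate_succ_apply']

theorem mem_periodicPts_comap_of_mem_minimalPrimes [IsNoetherianRing S] {g : S →+* S}
    (hg : Function.Surjective g) {J P : Ideal S} (hJ : J.comap g = J)
    (hP : P ∈ J.minimalPrimes) : P ∈ Function.periodicPts (Ideal.comap g) := by
  have hmaps : Set.MapsTo (Ideal.comap g) J.minimalPrimes J.minimalPrimes := fun P hP => by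
    rw [← hJ, Ideal.comap_minimalPrimes_eq_of_surjective hg]
    exact ⟨P, hP, rfl⟩
  have : Finite J.minimalPrimes := Ideal.finite_minimalPrimes_of_isNoetherianRing S J
  have hinj : Function.Injective hmaps.restrict :=
    hmaps.restrict_inj.2 (Ideal.comap_injective_of_surjective g hg).injOn
  obtain ⟨N, hN, hper⟩ := hinj.mem_periodicPts ⟨P, hP⟩
  exact ⟨N, hN, hper.map (g := Subtype.val) fun _ => rfl⟩

end PeriodicPrimes

section Poles

variable {R S : Type*} [CommRing R] [CommRing S] [Algebra R S]

/-- An ideal `I` of `R` is a pole of the iterates of `g : S → S` if it contains all denominators of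
some `s : S` that an iterate of `g` sends into `R`. For a prime `I` this says that some `s` with
`g^[n] s ∈ R` does not lie in the localization of `R` at `I`. -/
def IsPole (g : S → S) (I : Ideal R) : Prop :=
  ∃ (n : ℕ) (s : S), g^[n] s ∈ (algebraMap R S).range ∧ denominatorIdeal R s ≤ I

theorem IsPole.mono {g : S → S} {I I' : Ideal R} (h : IsPole g I) (hI : I ≤ I') : IsPole g I' := by
  obtain ⟨n, s, hs, hle⟩ := h
  exact ⟨n, s, hs, hle.trans hI⟩

theorem denominatorIdeal_le_comap_of_semiconj (γ : R →+* R) (g : S →+* S)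
    (h : Function.Semiconj (algebraMap R S) γ g) (s : S) :
    denominatorIdeal R s ≤ (denominatorIdeal R (g s)).comap γ := by
  intro r hr
  obtain ⟨w, hw⟩ := mem_denominatorIdeal.1 hr
  exact mem_denominatorIdeal.2 ⟨γ w, by rw [h w, hw, map_mul, h r]⟩

theorem IsPole.comap {γ : R →+* R} {g : S →+* S} (hg : Function.Surjective g)
    (h : Function.Semiconj (algebraMap R S) γ g) {I : Ideal R} (hI : IsPole g I) :
    IsPole g (I.comap γ) := by
  obtain ⟨n, s, hs, hle⟩ := hI
  obtain ⟨s, rfl⟩ := hg s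
  exact ⟨n + 1, s, hs,
    (denominatorIdeal_le_comap_of_semiconj γ g h s).trans (Ideal.comap_mono hle)⟩

/-- The intersection of the primes of `S` lying over poles of `g`. -/
def polarIdeal (R : Type*) {S : Type*} [CommRing R] [CommRing S] [Algebra R S] (g : S → S) :
    Ideal S :=
  sInf {P | P.IsPrime ∧ IsPole g (P.comap (algebraMap R S))}

theorem comap_polarIdeal [IsNoetherianRing S] (γ : R →+* R) (g : S ≃+* S)
    (h : Function.Semiconj (algebraMap R S) γ g) :
    (polarIdeal R g).comap (g : S →+* S) = polarIdeal R g := by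
  have hmono : StrictMono (Ideal.comap (g : S →+* S)) :=
    Monotone.strictMono_of_injective (fun _ _ => Ideal.comap_mono)
      (Ideal.comap_injective_of_surjective _ g.surjective)
  refine apply_eq_of_le_apply hmono fun x hx => Ideal.mem_sInf.2 fun {P} ⟨hP, hpole⟩ => ?_
  have hcomm : (P.comap (g : S →+* S)).comap (algebraMap R S) =
      (P.comap (algebraMap R S)).comap γ := by
    ext r
    change g (algebraMap R S r) ∈ P ↔ algebraMap R S (γ r) ∈ P
    rw [h r]
  refine Ideal.mem_sInf.1 hx ⟨hP.comap (g : S →+* S), ?_⟩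
  rw [hcomm]
  exact hpole.comap (g := (g : S →+* S)) g.surjective h

variable {k : Type*} [Field k] [Algebra k R] [Algebra k S] [IsScalarTower k R S]
  [IsDomain R] [IsDomain S] [FaithfulSMul R S]
  (γ : R →ₐ[k] R) (g : S ≃ₐ[k] S) (h : Function.Semiconj (algebraMap R S) γ g)

include h

theorem denominatorIdeal_ne_bot_of_iterate_mem_range [Algebra.EssFiniteType k S] {n : ℕ} {s : S}
    (hs : g^[n] s ∈ (algebraMap R S).range) : denominatorIdeal R s ≠ ⊥ :=
  denominatorIdeal_ne_bot_of_semiconj (γ ^ n) (g ^ n)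
    (by simpa using h.iterate_right n) (by simpa using hs)

theorem IsPole.exists_mem_minimalPrimes_le [Algebra.EssFiniteType k S] {I : Ideal R} [I.IsPrime]
    (hI : IsPole g I) :
    ∃ p ≤ I, IsPole g p ∧ ∃ s : S, denominatorIdeal R s ≠ ⊥ ∧
      p ∈ (denominatorIdeal R s).minimalPrimes := by
  obtain ⟨n, s, hs, hle⟩ := hI
  obtain ⟨p, hp, hpI⟩ := Ideal.exists_minimalPrimes_le hle
  exact ⟨p, hpI, ⟨n, s, hs, hp.1.2⟩, s, denominatorIdeal_ne_bot_of_iterate_mem_range γ g h hs, hp⟩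

variable [IsIntegrallyClosed R] [Algebra.FiniteType k R] [Algebra.FiniteType k S]

/-- Every pole contains one of finitely many poles, so that the primes lying over poles form a
closed set. -/
theorem isPole_comap_of_polarIdeal_le {P : Ideal S} [hP : P.IsPrime] (hle : polarIdeal R g ≤ P) :
    IsPole g (P.comap (algebraMap R S)) := by
  have : IsNoetherianRing R := Algebra.FiniteType.isNoetherianRing k R
  have : Algebra.FiniteType R S := .of_restrictScalars_finiteType k R S
  have hfin := (finite_setOf_mem_minimalPrimes_denominatorIdeal (R := R) (S := S)).inter_of_right
    {p | IsPole g p}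
  have hinf : hfin.toFinset.inf (Ideal.map (algebraMap R S)) ≤ polarIdeal R g := by
    refine le_sInf fun P' ⟨hP', hpole⟩ => ?_
    obtain ⟨p, hp, hpole, hmin⟩ := hpole.exists_mem_minimalPrimes_le γ g h
    exact (Finset.inf_le (hfin.mem_toFinset.2 ⟨hpole, hmin⟩)).trans (Ideal.map_le_iff_le_comap.2 hp)
  obtain ⟨p, hp, hpP⟩ := hP.inf_le'.1 (hinf.trans hle)
  exact (hfin.mem_toFinset.1 hp).1.mono (Ideal.map_le_iff_le_comap.1 hpP)

/-- Some iterate of `g` fixes a component of the zero locus of the polar ideal. -/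
theorem not_isPole_comap [CharZero k] (P : Ideal S) [P.IsPrime] :
    ¬ IsPole g (P.comap (algebraMap R S)) := by
  intro hpole
  have : IsNoetherianRing S := Algebra.FiniteType.isNoetherianRing k S
  obtain ⟨P₀, hP₀, -⟩ := Ideal.exists_minimalPrimes_le
    (show polarIdeal R g ≤ P from sInf_le ⟨inferInstance, hpole⟩)
  have := hP₀.1.1
  obtain ⟨N, hN, hper⟩ := mem_periodicPts_comap_of_mem_minimalPrimes (g := (g : S →+* S))
    g.surjective (comap_polarIdeal (γ : R →+* R) (g : S ≃+* S) h) hP₀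
  obtain ⟨n, s, hs, hle⟩ := isPole_comap_of_polarIdeal_le γ g h hP₀.1.2
  obtain ⟨d, hd⟩ := Nat.exists_eq_add_of_le' (Nat.le_mul_of_pos_left n hN)
  refine not_denominatorIdeal_le_comap_of_semiconj (γ ^ (N * n)) (g ^ (N * n))
    (by simpa using h.iterate_right (N * n)) P₀ ?_ ?_ hle
  · ext x
    rw [Ideal.mem_comap, AlgEquiv.coe_pow]
    exact mem_iterate_comap.symm.trans (Iff.of_eq congr(x ∈ $(hper.mul_const n)))
  · obtain ⟨r, hr⟩ := hs
    rw [AlgEquiv.coe_pow, hd, Function.iterate_add_apply, ← hr, ← h.iterate_right d r]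
    exact ⟨_, rfl⟩

theorem surjective_of_forall_map_ne_top [CharZero k]
    (hht : ∀ p : Ideal R, p.IsPrime → p.height = 1 → p.map (algebraMap R S) ≠ ⊤) :
    Function.Surjective γ := by
  intro r
  have : IsNoetherianRing R := Algebra.FiniteType.isNoetherianRing k R
  suffices hs : g.symm (algebraMap R S r) ∈ (algebraMap R S).range by
    obtain ⟨r', hr'⟩ := hs
    refine ⟨r', FaithfulSMul.algebraMap_injective R S ?_⟩
    rw [h r', hr', g.apply_symm_apply]
  by_contra hs
  obtain ⟨Q, hQ, hle⟩ := Ideal.exists_le_maximal _ (mt denominatorIdeal_eq_top_iff.1 hs)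
  have hQ : IsPole g Q := ⟨1, _, ⟨r, (g.apply_symm_apply _).symm⟩, hle⟩
  obtain ⟨p, -, hpole, s, hden, hp⟩ := hQ.exists_mem_minimalPrimes_le γ g h
  obtain ⟨P, hP, hpP⟩ := Ideal.exists_le_maximal _
    (hht p hp.1.1 (height_eq_one_of_mem_minimalPrimes_denominatorIdeal hden hp))
  exact not_isPole_comap γ g h P (hpole.mono (Ideal.map_le_iff_le_comap.1 hpP))

end Poles

theorem heightOf_eq_height {R : Type*} [CommRing R] (p : Ideal R) [hp : p.IsPrime] :
    p.heightOf = p.height := by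
  rw [show p.height = Order.height (⟨p, hp⟩ : PrimeSpectrum R) from
    PrimeSpectrum.height_eq_orderHeight ⟨p, hp⟩]
  exact le_antisymm (iInf₂_le (⟨p, hp⟩ : PrimeSpectrum R) (le_refl p))
    (le_iInf₂ fun q hq => Order.height_mono hq)

/-- Let `k` be a field of characteristic 0 and `S`, `R` affine domains over `k` with
`R` a `k`-subalgebra of `S`.  Assume `R` is integrally closed (in its fraction field)
and every ideal of height 1 in `R` generates a proper ideal in `S`.  If a `k`-algebra
endomorphism `F : S → S` with `F(R) ⊆ R` is bijective, then so is its restriction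
`R → R`. -/
theorem subring_invariant_automorphism_restricts
    {k S : Type*} [Field k] [CharZero k]
    [CommRing S] [IsDomain S] [Algebra k S] [Algebra.FiniteType k S]
    (R : Subalgebra k S) [Algebra.FiniteType k ↥R]
    [IsIntegrallyClosed ↥R]
    (hht : ∀ I : Ideal ↥R, I.heightOf = 1 → Ideal.map (algebraMap ↥R S) I ≠ ⊤)
    (F : S →ₐ[k] S) (hF : ∀ r ∈ R, F r ∈ R)
    (hFbij : Function.Bijective F) :
    Function.Bijective (fun r : ↥R => (⟨F r.1, hF r.1 r.2⟩ : ↥R)) := by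
  let γ : R →ₐ[k] R := (F.comp R.val).codRestrict R fun r => hF r r.2
  let g : S ≃ₐ[k] S := AlgEquiv.ofBijective F hFbij
  have h : Function.Semiconj (algebraMap R S) γ g := fun _ => rfl
  refine ⟨fun x y hxy => Subtype.ext (hFbij.1 (congrArg Subtype.val hxy)), ?_⟩
  exact surjective_of_forall_map_ne_top γ g h fun p _ hp =>
    hht p ((heightOf_eq_height p).trans hp)
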